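/- arXiv:2603.02534 — 9 statements merged into one kernel-verified Lean document; each statement's English description precedes it below -/
import Mathlib

section
/- Let n ≥ 1, let γ > 0, let t₀ < T be real numbers, and let φ : ℝ → ℝⁿ be continuous with |φ(s)| ≤ φ_M for all s ∈ [t₀,T], where φ_M ≥ 0. Assume φ is exciting on [t₀,T] with level η > 0. Then every solution x : [t₀,T] → ℝⁿ of the gradient-flow error dynamics x'(t) = −γ⟨φ(t), x(t)⟩φ(t) satisfies |x(T)|² ≤ (1 − 2ηγ/(1 + φ_M²γ(T − t₀))²)·|x(t₀)|². -/
open scoped RealInnerProductSpace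

/-- Energy decay bound under interval excitation for the
gradient-flow error dynamics. -/
theorem stmt0 (n : ℕ) (hn : 1 ≤ n) (γ : ℝ) (hγ : 0 < γ) (t₀ T : ℝ) (ht : t₀ < T)
    (φM : ℝ) (hφM : 0 ≤ φM) (η : ℝ) (hη : 0 < η)
    (φ : ℝ → EuclideanSpace ℝ (Fin n)) (hφc : Continuous φ)
    (hbound : ∀ s ∈ Set.Icc t₀ T, ‖φ s‖ ≤ φM)
    (hexc : ∀ v : EuclideanSpace ℝ (Fin n), η * ‖v‖ ^ 2 ≤ ∫ s in t₀..T, ⟪φ s, v⟫ ^ 2)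
    (x : ℝ → EuclideanSpace ℝ (Fin n))
    (hx : ∀ t ∈ Set.Icc t₀ T, HasDerivAt x (-(γ * ⟪φ t, x t⟫) • φ t) t) :
    ‖x T‖ ^ 2 ≤ (1 - 2 * η * γ / (1 + φM ^ 2 * γ * (T - t₀)) ^ 2) * ‖x t₀‖ ^ 2 := by
  have hL : 0 < T - t₀ := by linarith
  have hle : t₀ ≤ T := ht.le
  have hxc : ContinuousOn x (Set.Icc t₀ T) := fun t h => (hx t h).continuousAt.continuousWithinAt
  have huc : ContinuousOn (fun t => ⟪φ t, x t⟫) (Set.Icc t₀ T) :=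
    ContinuousOn.inner hφc.continuousOn hxc
  have hu2c : ContinuousOn (fun t => ⟪φ t, x t⟫ ^ 2) (Set.Icc t₀ T) := huc.pow 2
  have hu2i := hu2c.intervalIntegrable_of_Icc (μ := MeasureTheory.volume) hle
  have huac : ContinuousOn (fun t => |⟪φ t, x t⟫|) (Set.Icc t₀ T) := huc.abs
  have huai := huac.intervalIntegrable_of_Icc (μ := MeasureTheory.volume) hle
  set I := ∫ t in t₀..T, ⟪φ t, x t⟫ ^ 2 with hI
  set J := ∫ t in t₀..T, |⟪φ t, x t⟫| with hJ
  have hI0 : 0 ≤ I := intervalIntegral.integral_nonneg hle (fun t _ => sq_nonneg _)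
  have hJ0 : 0 ≤ J := intervalIntegral.integral_nonneg hle (fun t _ => abs_nonneg _)
  -- energy identity
  have hE : ‖x T‖ ^ 2 = ‖x t₀‖ ^ 2 - 2 * γ * I := by
    have h1 : ∫ t in t₀..T, (-2 * γ) * ⟪φ t, x t⟫ ^ 2 = ‖x T‖ ^ 2 - ‖x t₀‖ ^ 2 := by
      refine intervalIntegral.integral_eq_sub_of_hasDerivAt (f := fun t => ‖x t‖ ^ 2) ?_
        (hu2i.const_mul _)
      intro t h
      rw [Set.uIcc_of_le hle] at h
      have h2 := (hx t h).norm_sq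
      have h3 : 2 * ⟪x t, -(γ * ⟪φ t, x t⟫) • φ t⟫ = (-2 * γ) * ⟪φ t, x t⟫ ^ 2 := by
        rw [inner_smul_right, real_inner_comm (φ t) (x t)]
        ring
      rw [h3] at h2
      exact h2
    rw [intervalIntegral.integral_const_mul] at h1
    linarith
  -- Cauchy-Schwarz
  have hCS : J ^ 2 ≤ (T - t₀) * I := by
    have h1 : 0 ≤ ∫ t in t₀..T, (⟪φ t, x t⟫ ^ 2 - 2 * (J / (T - t₀)) * |⟪φ t, x t⟫|
        + (J / (T - t₀)) ^ 2) := by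
      refine intervalIntegral.integral_nonneg hle (fun t _ => ?_)
      have := sq_nonneg (|⟪φ t, x t⟫| - J / (T - t₀))
      have h3 := sq_abs ⟪φ t, x t⟫
      nlinarith
    rw [intervalIntegral.integral_add (hu2i.sub (huai.const_mul _)) (by simp),
      intervalIntegral.integral_sub hu2i (huai.const_mul _),
      intervalIntegral.integral_const_mul, intervalIntegral.integral_const, ← hI, ← hJ,
      smul_eq_mul] at h1
    have h2 : I - 2 * (J / (T - t₀)) * J + (T - t₀) * (J / (T - t₀)) ^ 2
        = I - J ^ 2 / (T - t₀) := by
      field_simp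
      ring
    rw [h2] at h1
    have h3 : J ^ 2 / (T - t₀) ≤ I := by linarith
    rw [div_le_iff₀ hL] at h3
    linarith
  have hD : ∀ s ∈ Set.Icc t₀ T, ‖x t₀ - x s‖ ≤ γ * φM * J := by
    intro s hs
    have hsub : Set.Icc t₀ s ⊆ Set.Icc t₀ T := Set.Icc_subset_Icc_right hs.2
    have hdc : ContinuousOn (fun t => -(γ * ⟪φ t, x t⟫) • φ t) (Set.Icc t₀ T) :=
      ((continuousOn_const.mul huc).neg).smul hφc.continuousOn
    have h1 := intervalIntegral.integral_eq_sub_of_hasDerivAt (f := x) (a := t₀) (b := s)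
      (f' := fun t => -(γ * ⟪φ t, x t⟫) • φ t)
      (fun t h => hx t (hsub (by rwa [Set.uIcc_of_le hs.1] at h)))
      ((hdc.mono hsub).intervalIntegrable_of_Icc hs.1)
    rw [norm_sub_rev, ← h1]
    calc _ ≤ ∫ t in t₀..s, ‖-(γ * ⟪φ t, x t⟫) • φ t‖ :=
          intervalIntegral.norm_integral_le_integral_norm hs.1
      _ ≤ ∫ t in t₀..s, γ * φM * |⟪φ t, x t⟫| := by
          refine intervalIntegral.integral_mono_on hs.1
            ((hdc.mono hsub).norm.intervalIntegrable_of_Icc hs.1)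
            (((huac.mono hsub).intervalIntegrable_of_Icc hs.1).const_mul _) ?_
          intro t h
          rw [norm_smul, norm_neg, norm_mul, Real.norm_eq_abs, Real.norm_eq_abs, abs_of_pos hγ]
          have := mul_le_mul_of_nonneg_left (hbound t (hsub h))
            (mul_nonneg hγ.le (abs_nonneg ⟪φ t, x t⟫))
          linarith
      _ ≤ ∫ t in t₀..T, γ * φM * |⟪φ t, x t⟫| := by
          refine intervalIntegral.integral_mono_interval le_rfl hs.1 hs.2 ?_ (huai.const_mul _)
          exact Filter.Eventually.of_forall (fun t => by dsimp; positivity)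
      _ = _ := intervalIntegral.integral_const_mul _ _
  set c := φM ^ 2 * γ * (T - t₀) with hc
  have hc0 : 0 ≤ c := by positivity
  have hP : ∀ s ∈ Set.Icc t₀ T,
      ⟪φ s, x t₀⟫ ^ 2 ≤ (1 + c) * ⟪φ s, x s⟫ ^ 2 + (1 + c) * c * I / (T - t₀) := by
    intro s hs
    have h1 : ⟪φ s, x t₀⟫ = ⟪φ s, x s⟫ + ⟪φ s, x t₀ - x s⟫ := by rw [inner_sub_right]; ring
    rw [h1]
    set a := ⟪φ s, x s⟫
    set b := ⟪φ s, x t₀ - x s⟫ with hb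
    have h2 : |b| ≤ φM * (γ * φM * J) :=
      (abs_real_inner_le_norm _ _).trans
        (mul_le_mul (hbound s hs) (hD s hs) (norm_nonneg _) hφM)
    have h3 : b ^ 2 ≤ c ^ 2 * I / (T - t₀) := by
      have h4 : b ^ 2 ≤ (φM * (γ * φM * J)) ^ 2 := by
        rw [← sq_abs]
        exact pow_le_pow_left₀ (abs_nonneg _) h2 2
      have h5 : (φM * (γ * φM * J)) ^ 2 ≤ (γ * φM ^ 2) ^ 2 * ((T - t₀) * I) := by
        have := mul_le_mul_of_nonneg_left hCS (sq_nonneg (γ * φM ^ 2))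
        linarith
      have h6 : (γ * φM ^ 2) ^ 2 * ((T - t₀) * I) = c ^ 2 * I / (T - t₀) := by
        rw [hc]; field_simp
      linarith
    rcases hc0.eq_or_lt with h0 | h0
    · rw [← h0] at h3 ⊢
      have : b = 0 := by
        have : b ^ 2 ≤ 0 := by simpa using h3
        exact pow_eq_zero_iff (two_ne_zero) |>.1 (le_antisymm this (sq_nonneg _))
      rw [this]; simp
    · have e1 : c ^ 2 * I / (T - t₀) = c * (c * (I / (T - t₀))) := by ring
      have e2 : (1 + c) * c * I / (T - t₀) = (1 + c) * (c * (I / (T - t₀))) := by ring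
      rw [e1] at h3
      rw [e2]
      set K := c * (I / (T - t₀))
      refine le_of_mul_le_mul_left ?_ h0
      have := mul_le_mul_of_nonneg_left h3 (by linarith : 0 ≤ 1 + c)
      nlinarith [sq_nonneg (c * a - b)]
  have hmain : η * ‖x t₀‖ ^ 2 ≤ (1 + c) ^ 2 * I := by
    refine (hexc (x t₀)).trans ?_
    have h1 : ∫ s in t₀..T, ⟪φ s, x t₀⟫ ^ 2 ≤
        ∫ s in t₀..T, ((1 + c) * ⟪φ s, x s⟫ ^ 2 + (1 + c) * c * I / (T - t₀)) := by
      refine intervalIntegral.integral_mono_on hle ?_ ((hu2i.const_mul _).add (by simp)) hP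
      exact ((hφc.inner continuous_const).pow 2).intervalIntegrable _ _
    refine h1.trans (le_of_eq ?_)
    rw [intervalIntegral.integral_add (hu2i.const_mul _) (by simp),
      intervalIntegral.integral_const_mul, intervalIntegral.integral_const, ← hI, smul_eq_mul]
    field_simp
  rw [hE]
  have hpos : 0 < (1 + c) ^ 2 := by positivity
  have h7 : η * ‖x t₀‖ ^ 2 / (1 + c) ^ 2 ≤ I := by
    rw [div_le_iff₀ hpos]; linarith
  have h8 : 2 * η * γ / (1 + c) ^ 2 * ‖x t₀‖ ^ 2 = 2 * γ * (η * ‖x t₀‖ ^ 2 / (1 + c) ^ 2) := by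
    ring
  have h9 := mul_le_mul_of_nonneg_left h7 (by positivity : 0 ≤ 2 * γ)
  rw [sub_mul, one_mul, h8]
  linarith
end

section
/- Let n ≥ 1, let γ > 0, let t₀ < T be real numbers, and let φ : ℝ → ℝⁿ be continuous with |φ(s)| ≤ φ_M for all s ∈ [t₀,T], where φ_M ≥ 0. Assume 1 − φ_M²γ(T − t₀) > 0. Then every solution x : [t₀,T] → ℝⁿ of the gradient-flow error dynamics x'(t) = −γ⟨φ(t), x(t)⟩φ(t) satisfies |x(t₀)|² ≤ (1 + 2γφ_M²(T − t₀)/(1 − φ_M²γ(T − t₀))²)·|x(T)|². -/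
open scoped RealInnerProductSpace

/-- Backward energy bound for the gradient-flow error dynamics. -/
theorem stmt1 (n : ℕ) (hn : 1 ≤ n) (γ : ℝ) (hγ : 0 < γ) (t₀ T : ℝ) (ht : t₀ < T)
    (φM : ℝ) (hφM : 0 ≤ φM)
    (φ : ℝ → EuclideanSpace ℝ (Fin n)) (hφc : Continuous φ)
    (hbound : ∀ s ∈ Set.Icc t₀ T, ‖φ s‖ ≤ φM)
    (hpos : 0 < 1 - φM ^ 2 * γ * (T - t₀))
    (x : ℝ → EuclideanSpace ℝ (Fin n))
    (hx : ∀ t ∈ Set.Icc t₀ T, HasDerivAt x (-(γ * ⟪φ t, x t⟫) • φ t) t) :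
    ‖x t₀‖ ^ 2 ≤ (1 + 2 * γ * φM ^ 2 * (T - t₀) / (1 - φM ^ 2 * γ * (T - t₀)) ^ 2) * ‖x T‖ ^ 2 := by
  have hd : ∀ t ∈ Set.Icc t₀ T,
      HasDerivAt (fun t => Real.exp (2 * (φM ^ 2 * γ) * (t - t₀)) * ‖x t‖ ^ 2)
        (Real.exp (2 * (φM ^ 2 * γ) * (t - t₀)) *
          (2 * γ * (φM ^ 2 * ‖x t‖ ^ 2 - ⟪φ t, x t⟫ ^ 2))) t := by
    intro t htt
    have h1 := (hx t htt).norm_sq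
    have h2 : HasDerivAt (fun t : ℝ => Real.exp (2 * (φM ^ 2 * γ) * (t - t₀)))
        (Real.exp (2 * (φM ^ 2 * γ) * (t - t₀)) * (2 * (φM ^ 2 * γ) * 1)) t :=
      (((hasDerivAt_id t).sub_const t₀).const_mul (2 * (φM ^ 2 * γ))).exp
    refine (h2.mul h1).congr_deriv ?_
    rw [inner_smul_right, real_inner_comm (φ t) (x t)]
    ring
  have hmono : MonotoneOn (fun t => Real.exp (2 * (φM ^ 2 * γ) * (t - t₀)) * ‖x t‖ ^ 2)
      (Set.Icc t₀ T) := by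
    apply monotoneOn_of_deriv_nonneg (convex_Icc _ _)
    · exact fun t htt => (hd t htt).continuousAt.continuousWithinAt
    · exact fun t htt => (hd t (interior_subset htt)).differentiableAt.differentiableWithinAt
    · intro t htt
      have htt := interior_subset htt
      rw [(hd t htt).deriv]
      have h3 : |⟪φ t, x t⟫| ≤ φM * ‖x t‖ :=
        (abs_real_inner_le_norm _ _).trans
          (mul_le_mul_of_nonneg_right (hbound t htt) (norm_nonneg _))
      have h4 : ⟪φ t, x t⟫ ^ 2 ≤ (φM * ‖x t‖) ^ 2 := by
        rw [← sq_abs]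
        exact pow_le_pow_left₀ (abs_nonneg _) h3 2
      have h5 : 0 ≤ φM ^ 2 * ‖x t‖ ^ 2 - ⟪φ t, x t⟫ ^ 2 := by
        rw [mul_pow] at h4
        linarith
      positivity
  have h := hmono (Set.left_mem_Icc.2 ht.le) (Set.right_mem_Icc.2 ht.le) ht.le
  simp only [sub_self, mul_zero, Real.exp_zero, one_mul] at h
  refine h.trans (mul_le_mul_of_nonneg_right ?_ (by positivity))
  have e1 : 2 * (φM ^ 2 * γ) * (T - t₀) = 2 * (φM ^ 2 * γ * (T - t₀)) := by ring
  have e2 : 2 * γ * φM ^ 2 * (T - t₀) = 2 * (φM ^ 2 * γ * (T - t₀)) := by ring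
  rw [e1, e2]
  generalize φM ^ 2 * γ * (T - t₀) = a at hpos
  have h6 : Real.exp a * (1 - a) ≤ 1 := by
    have h7 := Real.add_one_le_exp (-a)
    have h8 : Real.exp a * Real.exp (-a) = 1 := by rw [← Real.exp_add]; simp
    nlinarith [Real.exp_pos a]
  have h9 : (Real.exp a * (1 - a)) ^ 2 ≤ 1 :=
    pow_le_one₀ (mul_nonneg (Real.exp_pos a).le hpos.le) h6
  have h10 : 1 + 2 * a / (1 - a) ^ 2 = (1 + a ^ 2) / (1 - a) ^ 2 := by
    have := hpos.ne'
    field_simp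
    ring
  have h11 : Real.exp (2 * a) = Real.exp a ^ 2 := by
    rw [two_mul, Real.exp_add, sq]
  rw [h10, h11, le_div_iff₀ (by positivity)]
  nlinarith [sq_nonneg a]
end

section
/- Let n ≥ 1, let δ > 0, let γ₁, γ₂ > 0 with γ₁ ≠ γ₂, and let φ : ℝ → ℝⁿ be continuous with |φ(s)| ≤ φ_M for all s ∈ [0,δ], where φ_M ≥ 0, and exciting on [0,δ] with level η > 0. For i = 1,2, let Φᵢ : ℝ → Matrix n n ℝ be the state transition matrix of the error dynamics with rate γᵢ on [0,·], i.e., the solution of Φᵢ'(t) = −γᵢ φ(t)φ(t)ᵀ Φᵢ(t) with Φᵢ(0) = I. Assume: (7) 0 < φ_M²γ₂δ < 1, and (8) 0 < (1 − 2ηγ₁/(1 + φ_M²γ₁δ)²)(1 + 2γ₂φ_M²δ/(1 − φ_M²γ₂δ)²) < 1. Then the matrix Φ₁(δ) − Φ₂(δ) is invertible. -/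
open scoped RealInnerProductSpace

/-- Energy derivative along the error dynamics. -/
lemma aux_energy {n : ℕ} (γ : ℝ) (φ x : ℝ → EuclideanSpace ℝ (Fin n)) (t : ℝ)
    (hx : HasDerivAt x (-(γ * ⟪φ t, x t⟫) • φ t) t) :
    HasDerivAt (fun s => ‖x s‖ ^ 2) (-(2 * γ * ⟪φ t, x t⟫ ^ 2)) t := by
  have h := hx.norm_sq
  convert h using 1
  rw [inner_smul_right, real_inner_comm]
  ring

lemma aux_curve {n : ℕ} (γ : ℝ) (φ : ℝ → EuclideanSpace ℝ (Fin n))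
    (Φ : ℝ → Matrix (Fin n) (Fin n) ℝ) (t : ℝ)
    (h : ∀ i j, HasDerivAt (fun s => Φ s i j)
      ((-γ • (Matrix.vecMulVec (φ t) (φ t) * Φ t)) i j) t) (v : Fin n → ℝ) :
    HasDerivAt (fun s => WithLp.toLp 2 (Matrix.mulVec (Φ s) v) : ℝ → EuclideanSpace ℝ (Fin n))
      (-(γ * ⟪φ t, WithLp.toLp 2 (Matrix.mulVec (Φ t) v)⟫) • φ t) t := by
  have h1 : HasDerivAt (fun s => Matrix.mulVec (Φ s) v)
      (Matrix.mulVec (-γ • (Matrix.vecMulVec (φ t) (φ t) * Φ t)) v) t := by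
    rw [hasDerivAt_pi]
    intro i
    simp only [Matrix.mulVec, dotProduct]
    exact HasDerivAt.fun_sum fun j _ => (h i j).mul_const (v j)
  have h2 := ((PiLp.continuousLinearEquiv 2 ℝ (fun _ : Fin n => ℝ)).symm
    : (Fin n → ℝ) →L[ℝ] EuclideanSpace ℝ (Fin n)).hasFDerivAt.comp_hasDerivAt t h1
  have e : (-(γ * ⟪φ t, WithLp.toLp 2 (Matrix.mulVec (Φ t) v)⟫) • φ t) =
      (WithLp.toLp 2 (Matrix.mulVec (-γ • (Matrix.vecMulVec (φ t) (φ t) * Φ t)) v)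
        : EuclideanSpace ℝ (Fin n)) := by
    ext i
    rw [Matrix.smul_mulVec, ← Matrix.mulVec_mulVec, Matrix.vecMulVec_mulVec]
    simp only [PiLp.inner_apply, dotProduct, PiLp.smul_apply, Pi.smul_apply, smul_eq_mul,
      MulOpposite.smul_eq_mul_unop, MulOpposite.unop_op, RCLike.inner_apply, conj_trivial]
    simp only [mul_comm]
    ring
  rw [e]
  exact h2

section
variable {n : ℕ} {δ γ φM : ℝ} {φ x : ℝ → EuclideanSpace ℝ (Fin n)}

lemma aux_anti (hγ : 0 < γ)
    (hx : ∀ t ∈ Set.Icc (0 : ℝ) δ, HasDerivAt x (-(γ * ⟪φ t, x t⟫) • φ t) t) :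
    AntitoneOn (fun s => ‖x s‖ ^ 2) (Set.Icc 0 δ) := by
  apply antitoneOn_of_hasDerivWithinAt_nonpos (convex_Icc 0 δ)
    (f' := fun t => -(2 * γ * ⟪φ t, x t⟫ ^ 2))
  · intro t ht
    exact (aux_energy γ φ x t (hx t ht)).continuousAt.continuousWithinAt
  · intro t ht
    exact (aux_energy γ φ x t (hx t (interior_subset ht))).hasDerivWithinAt
  · intro t ht
    have : 0 ≤ 2 * γ * ⟪φ t, x t⟫ ^ 2 := by positivity
    linarith

lemma aux_lower (hδ : 0 < δ) (hγ : 0 < γ) (hφM : 0 ≤ φM)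
    (hbound : ∀ s ∈ Set.Icc (0 : ℝ) δ, ‖φ s‖ ≤ φM)
    (hx : ∀ t ∈ Set.Icc (0 : ℝ) δ, HasDerivAt x (-(γ * ⟪φ t, x t⟫) • φ t) t) :
    ‖x 0‖ * (1 - φM ^ 2 * γ * δ) ≤ ‖x δ‖ := by
  have ha := aux_anti hγ hx
  have h := norm_image_sub_le_of_norm_deriv_le_segment'
    (f := x) (f' := fun t => (-(γ * ⟪φ t, x t⟫) • φ t)) (C := φM ^ 2 * γ * ‖x 0‖)
    (a := 0) (b := δ)
    (fun t ht => (hx t ht).hasDerivWithinAt) (by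
      intro t ht
      have ht' : t ∈ Set.Icc 0 δ := ⟨ht.1, ht.2.le⟩
      have h1 := ha (Set.left_mem_Icc.2 hδ.le) ht' ht.1
      have h1' : ‖x t‖ ≤ ‖x 0‖ := by
        simpa using (pow_le_pow_iff_left₀ (norm_nonneg _) (norm_nonneg _) two_ne_zero).1 h1
      have h2 := abs_real_inner_le_norm (φ t) (x t)
      have h3 := hbound t ht'
      rw [norm_smul, norm_neg, Real.norm_eq_abs, abs_mul, abs_of_pos hγ]
      calc γ * |⟪φ t, x t⟫| * ‖φ t‖ ≤ γ * (φM * ‖x 0‖) * φM := by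
            gcongr
            exact h2.trans (by gcongr)
        _ = _ := by ring) δ (Set.right_mem_Icc.2 hδ.le)
  have h4 := norm_sub_norm_le (x 0) (x δ)
  rw [norm_sub_rev] at h4
  nlinarith

lemma aux_dev (hγ : 0 < γ) (hφM : 0 ≤ φM)
    (hbound : ∀ s ∈ Set.Icc (0 : ℝ) δ, ‖φ s‖ ≤ φM)
    (hx : ∀ t ∈ Set.Icc (0 : ℝ) δ, HasDerivAt x (-(γ * ⟪φ t, x t⟫) • φ t) t)
    (a : ℝ) (ha : 0 < a) (t : ℝ) (ht : t ∈ Set.Icc (0 : ℝ) δ) :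
    ‖x t - x 0‖ ≤ γ * φM * (a * t + (‖x 0‖ ^ 2 - ‖x t‖ ^ 2) / (2 * γ) / a) / 2 := by
  refine image_norm_le_of_norm_deriv_right_le_deriv_boundary'
    (f := fun t => x t - x 0) (f' := fun t => (-(γ * ⟪φ t, x t⟫) • φ t)) (a := 0) (b := δ)
    (B := fun t => γ * φM * (a * t + (‖x 0‖ ^ 2 - ‖x t‖ ^ 2) / (2 * γ) / a) / 2)
    (B' := fun t => γ * φM * (a * 1 + (-(-(2 * γ * ⟪φ t, x t⟫ ^ 2))) / (2 * γ) / a) / 2)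
    ?_ ?_ ?_ ?_ ?_ ?_ ht
  · intro t ht
    exact ((hx t ht).sub_const _).continuousAt.continuousWithinAt
  · intro t ht
    exact ((hx t ⟨ht.1, ht.2.le⟩).sub_const _).hasDerivWithinAt
  · simp
  · intro t ht
    exact (((((hasDerivAt_id t).const_mul a).add ((((aux_energy γ φ x t (hx t ht)).const_sub
      (‖x 0‖ ^ 2)).div_const (2 * γ)).div_const a)).const_mul
        (γ * φM)).div_const 2).continuousAt.continuousWithinAt
  · intro t ht
    exact (((((hasDerivAt_id t).const_mul a).add ((((aux_energy γ φ x t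
      (hx t ⟨ht.1, ht.2.le⟩)).const_sub
      (‖x 0‖ ^ 2)).div_const (2 * γ)).div_const a)).const_mul
        (γ * φM)).div_const 2).hasDerivWithinAt
  · intro t ht
    have h3 := hbound t ⟨ht.1, ht.2.le⟩
    rw [norm_smul, norm_neg, Real.norm_eq_abs, abs_mul, abs_of_pos hγ]
    have h5 : |⟪φ t, x t⟫| ≤ (a * 1 + (-(-(2 * γ * ⟪φ t, x t⟫ ^ 2))) / (2 * γ) / a) / 2 := by
      have e : (a * 1 + (-(-(2 * γ * ⟪φ t, x t⟫ ^ 2))) / (2 * γ) / a) / 2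
        = (a ^ 2 + |⟪φ t, x t⟫| ^ 2) / (2 * a) := by
        rw [sq_abs]; field_simp
      rw [e, le_div_iff₀ (by positivity)]
      nlinarith [sq_nonneg (a - |⟪φ t, x t⟫|)]
    calc γ * |⟪φ t, x t⟫| * ‖φ t‖ ≤ γ * ((a * 1 + (-(-(2 * γ * ⟪φ t, x t⟫ ^ 2))) / (2 * γ) / a) / 2) * φM := by
          have h6 := (abs_nonneg _).trans h5
          gcongr
      _ = _ := by ring

lemma aux_upper (hδ : 0 < δ) (hγ : 0 < γ) (hφM : 0 < φM) {η : ℝ}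
    (hφc : Continuous φ)
    (hbound : ∀ s ∈ Set.Icc (0 : ℝ) δ, ‖φ s‖ ≤ φM)
    (hexc : ∀ v : EuclideanSpace ℝ (Fin n), η * ‖v‖ ^ 2 ≤ ∫ s in (0:ℝ)..δ, ⟪φ s, v⟫ ^ 2)
    (hx : ∀ t ∈ Set.Icc (0 : ℝ) δ, HasDerivAt x (-(γ * ⟪φ t, x t⟫) • φ t) t) :
    ‖x δ‖ ^ 2 ≤ (1 - 2 * η * γ / (1 + φM ^ 2 * γ * δ) ^ 2) * ‖x 0‖ ^ 2 := by
  have hanti := aux_anti hγ hx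
  set E := (‖x 0‖ ^ 2 - ‖x δ‖ ^ 2) / (2 * γ) with hE
  set c := φM ^ 2 * γ * δ with hc
  have hcpos : 0 < c := by positivity
  have hE0 : 0 ≤ E := by
    have := hanti (Set.left_mem_Icc.2 hδ.le) (Set.right_mem_Icc.2 hδ.le) hδ.le
    have : ‖x δ‖ ^ 2 ≤ ‖x 0‖ ^ 2 := this
    apply div_nonneg <;> linarith
  have hxc : ContinuousOn x (Set.Icc 0 δ) := fun t ht =>
    (hx t ht).continuousAt.continuousWithinAt
  have hpc : ContinuousOn (fun t => ⟪φ t, x t⟫ ^ 2) (Set.Icc 0 δ) :=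
    (hφc.continuousOn.inner hxc).pow 2
  have hpi : IntervalIntegrable (fun t => ⟪φ t, x t⟫ ^ 2) MeasureTheory.volume 0 δ :=
    hpc.intervalIntegrable_of_Icc hδ.le
  have hint : ∫ s in (0:ℝ)..δ, ⟪φ s, x s⟫ ^ 2 = E := by
    have h := intervalIntegral.integral_eq_sub_of_hasDerivAt (a := 0) (b := δ)
      (f := fun s => ‖x s‖ ^ 2) (f' := fun t => -(2 * γ * ⟪φ t, x t⟫ ^ 2))
      (fun t ht => aux_energy γ φ x t (hx t (by rwa [Set.uIcc_of_le hδ.le] at ht)))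
      (hpi.const_mul (2 * γ)).neg
    rw [intervalIntegral.integral_neg, intervalIntegral.integral_const_mul] at h
    rw [hE, eq_div_iff (by positivity)]
    linarith
  have key : ∀ E' > E, η * ‖x 0‖ ^ 2 ≤ (1 + c) ^ 2 * E' := by
    intro E' hE'
    have hE'0 : 0 < E' := lt_of_le_of_lt hE0 hE'
    have hdev : ∀ t ∈ Set.Icc (0:ℝ) δ, ‖x t - x 0‖ ^ 2 ≤ γ ^ 2 * φM ^ 2 * (δ * E') := by
      intro t ht
      have hs : 0 < √(E' / δ) := Real.sqrt_pos.2 (by positivity)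
      have h1 := aux_dev hγ hφM.le hbound hx (√(E' / δ)) hs t ht
      have hle : (‖x 0‖ ^ 2 - ‖x t‖ ^ 2) / (2 * γ) ≤ E' := by
        refine le_trans ?_ hE'.le
        have : ‖x δ‖ ^ 2 ≤ ‖x t‖ ^ 2 := hanti ht (Set.right_mem_Icc.2 hδ.le) ht.2
        rw [hE]; gcongr
      have hsq : √(E' / δ) ^ 2 = E' / δ := Real.sq_sqrt (by positivity)
      have hE's : E' = √(E' / δ) ^ 2 * δ := by rw [hsq]; field_simp
      have h2 : ‖x t - x 0‖ ≤ γ * φM * (√(E' / δ) * δ) := by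
        refine h1.trans ?_
        calc _ ≤ γ * φM * (√(E' / δ) * δ + E' / √(E' / δ)) / 2 := by
              gcongr; exact ht.2
          _ = _ := by
              have : E' / √(E' / δ) = √(E' / δ) * δ := by
                rw [div_eq_iff hs.ne']; nlinarith
              rw [this]; ring
      calc ‖x t - x 0‖ ^ 2 ≤ (γ * φM * (√(E' / δ) * δ)) ^ 2 := by gcongr
        _ = γ ^ 2 * φM ^ 2 * (δ * (√(E' / δ) ^ 2 * δ)) := by ring
        _ = _ := by rw [← hE's]
    have hmono : ∫ s in (0:ℝ)..δ, ⟪φ s, x 0⟫ ^ 2 ≤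
        ∫ s in (0:ℝ)..δ, ((1 + c) * ⟪φ s, x s⟫ ^ 2 +
          (1 + 1 / c) * (φM ^ 2 * (γ ^ 2 * φM ^ 2 * (δ * E')))) := by
      apply intervalIntegral.integral_mono_on hδ.le
      · exact Continuous.intervalIntegrable (by fun_prop) _ _
      · exact (hpi.const_mul _).add intervalIntegrable_const
      · intro t ht
        have h1 : ⟪φ t, x 0⟫ = ⟪φ t, x t⟫ - ⟪φ t, x t - x 0⟫ := by
          rw [inner_sub_right]; ring
        have h2 : ⟪φ t, x t - x 0⟫ ^ 2 ≤ φM ^ 2 * (γ ^ 2 * φM ^ 2 * (δ * E')) := by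
          calc ⟪φ t, x t - x 0⟫ ^ 2 = |⟪φ t, x t - x 0⟫| ^ 2 := (sq_abs _).symm
            _ ≤ (‖φ t‖ * ‖x t - x 0‖) ^ 2 := by
              gcongr; exact abs_real_inner_le_norm _ _
            _ = ‖φ t‖ ^ 2 * ‖x t - x 0‖ ^ 2 := by ring
            _ ≤ _ := by
              gcongr
              · exact hbound t ht
              · exact hdev t ht
        rw [h1]
        generalize ⟪φ t, x t⟫ = p at *
        generalize ⟪φ t, x t - x 0⟫ = q at *
        have h3 : (p - q) ^ 2 ≤ (1 + c) * p ^ 2 + (1 + 1 / c) * q ^ 2 := by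
          have : (1 + c) * p ^ 2 + (1 + 1 / c) * q ^ 2 - (p - q) ^ 2 = (c * p + q) ^ 2 / c := by
            field_simp; ring
          have : 0 ≤ (c * p + q) ^ 2 / c := by positivity
          linarith
        refine h3.trans ?_
        gcongr
    rw [intervalIntegral.integral_add (hpi.const_mul _) intervalIntegrable_const,
      intervalIntegral.integral_const_mul, hint, intervalIntegral.integral_const] at hmono
    have e : (δ - 0) • ((1 + 1 / c) * (φM ^ 2 * (γ ^ 2 * φM ^ 2 * (δ * E')))) =
        (1 + c) * c * E' := by
      have : (δ - 0) • ((1 + 1 / c) * (φM ^ 2 * (γ ^ 2 * φM ^ 2 * (δ * E')))) =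
        (1 + 1 / c) * (c ^ 2) * E' := by
        rw [smul_eq_mul]; simp only [hc]; ring
      rw [this]; field_simp; try ring
    rw [e] at hmono
    have := hexc (x 0)
    nlinarith
  have key2 : η * ‖x 0‖ ^ 2 / (1 + c) ^ 2 ≤ E := by
    apply le_of_forall_gt_imp_ge_of_dense
    intro E' hE'
    rw [div_le_iff₀ (by positivity)]
    linarith [key E' hE']
  rw [hE, le_div_iff₀ (by positivity)] at key2
  have : (1 - 2 * η * γ / (1 + c) ^ 2) * ‖x 0‖ ^ 2 =
    ‖x 0‖ ^ 2 - η * ‖x 0‖ ^ 2 / (1 + c) ^ 2 * (2 * γ) := by ring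
  rw [this]; linarith
end

/-- Invertibility of `Φ₁(δ) − Φ₂(δ)` under interval excitation and
the design conditions (7)–(8). -/
theorem stmt6 (n : ℕ) (hn : 1 ≤ n) (δ : ℝ) (hδ : 0 < δ)
    (γ₁ γ₂ : ℝ) (hγ₁ : 0 < γ₁) (hγ₂ : 0 < γ₂) (hγ : γ₁ ≠ γ₂)
    (φM : ℝ) (hφM : 0 ≤ φM) (η : ℝ) (hη : 0 < η)
    (φ : ℝ → EuclideanSpace ℝ (Fin n)) (hφc : Continuous φ)
    (hbound : ∀ s ∈ Set.Icc (0 : ℝ) δ, ‖φ s‖ ≤ φM)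
    (hexc : ∀ v : EuclideanSpace ℝ (Fin n), η * ‖v‖ ^ 2 ≤ ∫ s in (0:ℝ)..δ, ⟪φ s, v⟫ ^ 2)
    (Φ₁ Φ₂ : ℝ → Matrix (Fin n) (Fin n) ℝ)
    (hΦ₁0 : Φ₁ 0 = 1) (hΦ₂0 : Φ₂ 0 = 1)
    (hΦ₁ : ∀ t ∈ Set.Icc (0 : ℝ) δ, ∀ i j, HasDerivAt (fun s => Φ₁ s i j)
      ((-γ₁ • (Matrix.vecMulVec (φ t) (φ t) * Φ₁ t)) i j) t)
    (hΦ₂ : ∀ t ∈ Set.Icc (0 : ℝ) δ, ∀ i j, HasDerivAt (fun s => Φ₂ s i j)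
      ((-γ₂ • (Matrix.vecMulVec (φ t) (φ t) * Φ₂ t)) i j) t)
    (h7 : 0 < φM ^ 2 * γ₂ * δ) (h7' : φM ^ 2 * γ₂ * δ < 1)
    (h8 : 0 < (1 - 2 * η * γ₁ / (1 + φM ^ 2 * γ₁ * δ) ^ 2) *
      (1 + 2 * γ₂ * φM ^ 2 * δ / (1 - φM ^ 2 * γ₂ * δ) ^ 2))
    (h8' : (1 - 2 * η * γ₁ / (1 + φM ^ 2 * γ₁ * δ) ^ 2) *
      (1 + 2 * γ₂ * φM ^ 2 * δ / (1 - φM ^ 2 * γ₂ * δ) ^ 2) < 1) :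
    IsUnit (Φ₁ δ - Φ₂ δ) := by
  by_contra hcon
  rw [Matrix.isUnit_iff_isUnit_det, isUnit_iff_ne_zero, not_not] at hcon
  obtain ⟨v, hv, hv0⟩ := Matrix.exists_mulVec_eq_zero_iff.2 hcon
  rw [Matrix.sub_mulVec, sub_eq_zero] at hv0
  have hφM' : 0 < φM := by
    rcases hφM.eq_or_lt with h | h
    · rw [← h] at h7; simp at h7
    · exact h
  have hu := aux_upper hδ hγ₁ hφM' hφc hbound hexc
    (fun t ht => aux_curve γ₁ φ Φ₁ t (hΦ₁ t ht) v)
  have hl := aux_lower hδ hγ₂ hφM hbound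
    (fun t ht => aux_curve γ₂ φ Φ₂ t (hΦ₂ t ht) v)
  simp only [hΦ₁0, hΦ₂0, Matrix.one_mulVec, hv0] at hu hl
  have hvpos : 0 < ‖(WithLp.toLp 2 v : EuclideanSpace ℝ (Fin n))‖ := by
    rw [norm_pos_iff]
    simpa using hv
  generalize ‖(WithLp.toLp 2 v : EuclideanSpace ℝ (Fin n))‖ = r at *
  generalize ‖(WithLp.toLp 2 (Matrix.mulVec (Φ₂ δ) v) : EuclideanSpace ℝ (Fin n))‖ = y at *
  generalize (1 - 2 * η * γ₁ / (1 + φM ^ 2 * γ₁ * δ) ^ 2) = A at *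
  have e : 2 * γ₂ * φM ^ 2 * δ = 2 * (φM ^ 2 * γ₂ * δ) := by ring
  rw [e] at h8 h8'
  generalize φM ^ 2 * γ₂ * δ = c at *
  have hc1 : 0 < 1 - c := by linarith
  have hb : 1 + 2 * c / (1 - c) ^ 2 = (1 + c ^ 2) / (1 - c) ^ 2 := by
    field_simp; ring
  rw [hb] at h8 h8'
  have hA : 0 < A := pos_of_mul_pos_left h8 (by positivity)
  rw [← mul_div_assoc, div_lt_one (by positivity)] at h8'
  have h1 : (r * (1 - c)) ^ 2 ≤ y ^ 2 := by gcongr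
  have h2 : A < (1 - c) ^ 2 := by nlinarith [mul_pos hA (pow_pos h7 2)]
  nlinarith [mul_lt_mul_of_pos_right h2 (pow_pos hvpos 2)]
end

section
/- Let n ≥ 1, let γ > 0, let t₀ ≤ T be real numbers, let φ : ℝ → ℝⁿ be continuous with |φ(s)| ≤ φ_M for all s ∈ [t₀,T], where φ_M ≥ 0, and let w : ℝ → ℝ be continuous. Then every solution θ̃ : [t₀,T] → ℝⁿ of the perturbed gradient-flow error dynamics θ̃'(t) = −γ⟨φ(t), θ̃(t)⟩φ(t) + γ w(t) φ(t) satisfies |θ̃(t)| ≤ |θ̃(t₀)| + γ φ_M ∫_{t₀}^{t} |w(s)| ds for all t ∈ [t₀,T]. -/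
open scoped RealInnerProductSpace

/-- ISS-type bound for the perturbed gradient-flow error
dynamics before the first jump. -/
theorem stmt8 (n : ℕ) (hn : 1 ≤ n) (γ : ℝ) (hγ : 0 < γ) (t₀ T : ℝ) (ht : t₀ ≤ T)
    (φM : ℝ) (hφM : 0 ≤ φM)
    (φ : ℝ → EuclideanSpace ℝ (Fin n)) (hφc : Continuous φ)
    (hbound : ∀ s ∈ Set.Icc t₀ T, ‖φ s‖ ≤ φM)
    (w : ℝ → ℝ) (hw : Continuous w)
    (θ : ℝ → EuclideanSpace ℝ (Fin n))
    (hθ : ∀ t ∈ Set.Icc t₀ T,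
      HasDerivAt θ (-(γ * ⟪φ t, θ t⟫) • φ t + (γ * w t) • φ t) t) :
    ∀ t ∈ Set.Icc t₀ T, ‖θ t‖ ≤ ‖θ t₀‖ + γ * φM * ∫ s in t₀..t, |w s| := by
  have hI : ∀ x, t₀ ≤ x → 0 ≤ ∫ s in t₀..x, |w s| := fun x hx =>
    intervalIntegral.integral_nonneg hx (fun s _ => abs_nonneg _)
  have hId : ∀ x, HasDerivAt (fun y => ∫ s in t₀..y, |w s|) |w x| x := fun x =>
    (hw.abs).integral_hasStrictDerivAt t₀ x |>.hasDerivAt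
  have key : ∀ ε : ℝ, 0 < ε → ∀ t ∈ Set.Icc t₀ T,
      ‖θ t‖ ≤ ‖θ t₀‖ + γ * φM * (∫ s in t₀..t, |w s|) + ε * (1 + (t - t₀)) := by
    intro ε hε
    set b : ℝ → ℝ := fun t => ‖θ t₀‖ + γ * φM * (∫ s in t₀..t, |w s|) + ε * (1 + (t - t₀)) with hb
    have hbpos : ∀ x, t₀ ≤ x → 0 < b x := by
      intro x hx
      have h1 := mul_nonneg (mul_nonneg hγ.le hφM) (hI x hx)
      have h2 : 0 < ε * (1 + (x - t₀)) := mul_pos hε (by linarith)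
      have h3 := norm_nonneg (θ t₀)
      simp only [hb]
      linarith
    have hbd : ∀ x, HasDerivAt b (γ * φM * |w x| + ε) x := by
      intro x
      have h := (((hId x).const_mul (γ * φM)).const_add ‖θ t₀‖).add
        ((((hasDerivAt_id x).sub_const t₀).const_add 1).const_mul ε)
      rw [mul_one] at h
      exact h
    have hfd : ∀ x ∈ Set.Icc t₀ T, HasDerivAt (fun y => ‖θ y‖ ^ 2)
        (2 * ⟪θ x, -(γ * ⟪φ x, θ x⟫) • φ x + (γ * w x) • φ x⟫) x :=
      fun x hx => (hθ x hx).norm_sq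
    have main := image_le_of_deriv_right_lt_deriv_boundary (a := t₀) (b := T)
      (f := fun y => ‖θ y‖ ^ 2) (B := fun y => b y ^ 2)
      (B' := fun x => 2 * b x * (γ * φM * |w x| + ε))
      (fun x hx => (hfd x hx).continuousAt.continuousWithinAt)
      (fun x hx => (hfd x (Set.Ico_subset_Icc_self hx)).hasDerivWithinAt)
      (by
        have : ‖θ t₀‖ ≤ b t₀ := by simp [hb, hε.le]
        exact pow_le_pow_left₀ (norm_nonneg _) this 2)
      (fun x => by
        have h := (hbd x).pow 2
        norm_num at h
        exact h)
      (by
        intro x hx heq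
        have hp := hbpos x hx.1
        have hn : ‖θ x‖ = b x := (pow_left_inj₀ (norm_nonneg _) hp.le two_ne_zero).1 heq
        have hip : |⟪φ x, θ x⟫| ≤ φM * b x := by
          rw [← hn]
          exact (abs_real_inner_le_norm _ _).trans
            (mul_le_mul_of_nonneg_right (hbound x (Set.Ico_subset_Icc_self hx)) (norm_nonneg _))
        have hwp : w x * ⟪φ x, θ x⟫ ≤ |w x| * (φM * b x) := by
          refine (le_abs_self _).trans ?_
          rw [abs_mul]
          exact mul_le_mul_of_nonneg_left hip (abs_nonneg _)
        have h1 := mul_le_mul_of_nonneg_left hwp hγ.le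
        have h2 := mul_nonneg hγ.le (sq_nonneg ⟪φ x, θ x⟫)
        have h3 := mul_pos hε hp
        simp only [inner_add_right, inner_smul_right, real_inner_comm (φ x) (θ x)]
        rw [real_inner_comm] at *
        nlinarith)
    intro t ht'
    exact (pow_le_pow_iff_left₀ (norm_nonneg _) (hbpos t ht'.1).le two_ne_zero).1 (main ht')
  intro t ht'
  refine le_of_forall_pos_le_add fun δ hδ => ?_
  have hpos : 0 < 1 + (t - t₀) := by linarith [ht'.1]
  have := key (δ / (1 + (t - t₀))) (div_pos hδ hpos) t ht'
  rwa [div_mul_cancel₀ _ hpos.ne'] at this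
end

section
/- Let n ≥ 1, let δ > 0, let γ₁, γ₂ > 0 with γ₁ ≠ γ₂, and let φ : ℝ → ℝⁿ be continuous with |φ(s)| ≤ φ_M for all s ≥ 0, where φ_M ≥ 0. Assume there exist μ ∈ (0, δ] and η > 0 such that φ is μ-persistently exciting with level η, i.e., for every σ ≥ 0 and every v ∈ ℝⁿ, ∫_{σ}^{σ+μ} ⟨φ(s), v⟩² ds ≥ η|v|². Assume further 0 < φ_M²γ₂δ < 1 and 0 < (1 − 2ηγ₁/(1 + φ_M²γ₁δ)²)(1 + 2γ₂φ_M²δ/(1 − φ_M²γ₂δ)²) < 1. Then, for every q ∈ ℕ, the matrix Φ₁((q+1)δ, qδ) − Φ₂((q+1)δ, qδ) is invertible, where Φᵢ(·, qδ) denotes the state transition matrix solving Φ'(t) = −γᵢ φ(t)φ(t)ᵀ Φ(t) with Φ(qδ) = I. -/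
open scoped RealInnerProductSpace

section helpers

/-- Cauchy–Schwarz for interval integrals of continuous functions. -/
lemma aux_cs (a b : ℝ) (hab : a ≤ b) (f g : ℝ → ℝ)
    (hf : ContinuousOn f (Set.Icc a b)) (hg : ContinuousOn g (Set.Icc a b)) :
    (∫ s in a..b, f s * g s) ^ 2 ≤ (∫ s in a..b, f s ^ 2) * ∫ s in a..b, g s ^ 2 := by
  have hff : IntervalIntegrable (fun s => f s ^ 2) MeasureTheory.volume a b :=
    (hf.pow 2).intervalIntegrable_of_Icc hab
  have hgg : IntervalIntegrable (fun s => g s ^ 2) MeasureTheory.volume a b :=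
    (hg.pow 2).intervalIntegrable_of_Icc hab
  have hfg : IntervalIntegrable (fun s => f s * g s) MeasureTheory.volume a b :=
    (hf.mul hg).intervalIntegrable_of_Icc hab
  have key : ∀ x : ℝ, 0 ≤ (∫ s in a..b, f s ^ 2) * (x * x) + (2 * ∫ s in a..b, f s * g s) * x
      + ∫ s in a..b, g s ^ 2 := by
    intro x
    have h0 : 0 ≤ ∫ s in a..b, (x * f s + g s) ^ 2 :=
      intervalIntegral.integral_nonneg hab (fun s _ => sq_nonneg _)
    have h1 : ∫ s in a..b, (x * f s + g s) ^ 2 =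
        ∫ s in a..b, ((x * x) * f s ^ 2 + (2 * x) * (f s * g s)) + g s ^ 2 := by
      congr 1; ext s; ring
    rw [h1, intervalIntegral.integral_add ((hff.const_mul _).add (hfg.const_mul _)) hgg,
      intervalIntegral.integral_add (hff.const_mul _) (hfg.const_mul _),
      intervalIntegral.integral_const_mul, intervalIntegral.integral_const_mul] at h0
    linarith
  have := discrim_le_zero key
  unfold discrim at this
  nlinarith

variable {E : Type*} [NormedAddCommGroup E] [InnerProductSpace ℝ E]

lemma aux_energy_s12 (a b γ : ℝ) (hab : a ≤ b) (φ x : ℝ → E) (hφ : Continuous φ)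
    (hx : ∀ t ∈ Set.Icc a b, HasDerivAt x (-(γ * ⟪φ t, x t⟫) • φ t) t) :
    ‖x b‖ ^ 2 = ‖x a‖ ^ 2 - 2 * γ * ∫ s in a..b, ⟪φ s, x s⟫ ^ 2 := by
  have hxc : ContinuousOn x (Set.Icc a b) :=
    fun t ht => (hx t ht).continuousAt.continuousWithinAt
  have hu : ContinuousOn (fun s => ⟪φ s, x s⟫) (Set.Icc a b) := hφ.continuousOn.inner hxc
  have hd : ∀ t ∈ Set.uIcc a b,
      HasDerivAt (fun s => ‖x s‖ ^ 2) (-(2 * γ) * ⟪φ t, x t⟫ ^ 2) t := by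
    intro t ht
    rw [Set.uIcc_of_le hab] at ht
    convert (hx t ht).norm_sq using 1
    rw [inner_smul_right, real_inner_comm]
    ring
  have := intervalIntegral.integral_eq_sub_of_hasDerivAt hd
    ((continuousOn_const.mul (hu.pow 2)).intervalIntegrable_of_Icc hab)
  rw [intervalIntegral.integral_const_mul] at this
  linarith

lemma aux_dist (a b γ M : ℝ) (φ x : ℝ → E) (hφ : Continuous φ)
    (hM : ∀ s ∈ Set.Icc a b, ‖φ s‖ ≤ M)
    (hx : ∀ t ∈ Set.Icc a b, HasDerivAt x (-(γ * ⟪φ t, x t⟫) • φ t) t)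
    (s t : ℝ) (has : a ≤ s) (hst : s ≤ t) (htb : t ≤ b) (p : E) (hp : ‖p‖ ≤ M) :
    ⟪p, x t - x s⟫ ^ 2 ≤ (γ * M ^ 2) ^ 2 * (b - a) * ∫ r in a..b, ⟪φ r, x r⟫ ^ 2 := by
  have hsub : Set.Icc s t ⊆ Set.Icc a b := Set.Icc_subset_Icc has htb
  have hab : a ≤ b := has.trans (hst.trans htb)
  have hM0 : 0 ≤ M := (norm_nonneg _).trans hp
  have hxc : ContinuousOn x (Set.Icc a b) :=
    fun t ht => (hx t ht).continuousAt.continuousWithinAt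
  have hu : ContinuousOn (fun s => ⟪φ s, x s⟫) (Set.Icc a b) := hφ.continuousOn.inner hxc
  have hg : Continuous (fun r => ⟪p, φ r⟫) := continuous_const.inner hφ
  have hd : ∀ r ∈ Set.uIcc s t,
      HasDerivAt (fun r => ⟪p, x r⟫) (-γ * (⟪φ r, x r⟫ * ⟪p, φ r⟫)) r := by
    intro r hr
    rw [Set.uIcc_of_le hst] at hr
    refine ((hasDerivAt_const r p).inner ℝ (hx r (hsub hr))).congr_deriv ?_
    rw [inner_smul_right, inner_zero_left]
    ring
  have h1 := intervalIntegral.integral_eq_sub_of_hasDerivAt hd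
    ((continuousOn_const.mul ((hu.mono hsub).mul hg.continuousOn)).intervalIntegrable_of_Icc hst)
  rw [intervalIntegral.integral_const_mul] at h1
  rw [inner_sub_right, ← h1]
  have h2 := aux_cs s t hst _ _ (hu.mono hsub) hg.continuousOn
  have h3 : ∫ r in s..t, ⟪φ r, x r⟫ ^ 2 ≤ ∫ r in a..b, ⟪φ r, x r⟫ ^ 2 :=
    intervalIntegral.integral_mono_interval has hst htb
      (Filter.Eventually.of_forall fun r => sq_nonneg _)
      ((hu.pow 2).intervalIntegrable_of_Icc hab)
  have h4 : ∫ r in s..t, ⟪p, φ r⟫ ^ 2 ≤ M ^ 4 * (b - a) := by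
    have : ∫ r in s..t, ⟪p, φ r⟫ ^ 2 ≤ ∫ r in s..t, M ^ 4 := by
      apply intervalIntegral.integral_mono_on hst ((hg.pow 2).intervalIntegrable _ _) (by simp)
      intro r hr
      have h5 : |⟪p, φ r⟫| ≤ M * M := (abs_real_inner_le_norm _ _).trans
        (mul_le_mul hp (hM r (hsub hr)) (norm_nonneg _) hM0)
      calc ⟪p, φ r⟫ ^ 2 = |⟪p, φ r⟫| ^ 2 := (sq_abs _).symm
        _ ≤ (M * M) ^ 2 := pow_le_pow_left₀ (abs_nonneg _) h5 2
        _ = M ^ 4 := by ring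
    rw [intervalIntegral.integral_const, smul_eq_mul] at this
    have h6 : 0 ≤ M ^ 4 := by positivity
    nlinarith
  have h7 : 0 ≤ ∫ r in s..t, ⟪p, φ r⟫ ^ 2 :=
    intervalIntegral.integral_nonneg hst (fun s _ => sq_nonneg _)
  have h8 : 0 ≤ ∫ r in a..b, ⟪φ r, x r⟫ ^ 2 :=
    intervalIntegral.integral_nonneg hab (fun s _ => sq_nonneg _)
  calc (-γ * ∫ r in s..t, ⟪φ r, x r⟫ * ⟪p, φ r⟫) ^ 2
      = γ ^ 2 * (∫ r in s..t, ⟪φ r, x r⟫ * ⟪p, φ r⟫) ^ 2 := by ring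
    _ ≤ γ ^ 2 * ((∫ r in a..b, ⟪φ r, x r⟫ ^ 2) * (M ^ 4 * (b - a))) := by
        apply mul_le_mul_of_nonneg_left _ (sq_nonneg _)
        exact h2.trans (mul_le_mul h3 h4 h7 h8)
    _ = _ := by ring

lemma aux_young (ε A B : ℝ) (hε : 0 < ε) :
    (A + B) ^ 2 ≤ (1 + ε) * A ^ 2 + (1 + 1 / ε) * B ^ 2 := by
  have : (1 + ε) * A ^ 2 + (1 + 1 / ε) * B ^ 2 - (A + B) ^ 2 = (ε * A - B) ^ 2 / ε := by
    field_simp; ring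
  have h : 0 ≤ (ε * A - B) ^ 2 / ε := by positivity
  linarith

/-- integral version of Young with uniformly bounded remainder. -/
lemma aux_int (a b ε K : ℝ) (hab : a ≤ b) (hε : 0 < ε) (f g : ℝ → ℝ)
    (hf : ContinuousOn f (Set.Icc a b)) (hg : ContinuousOn g (Set.Icc a b))
    (h : ∀ s ∈ Set.Icc a b, (f s - g s) ^ 2 ≤ K) :
    ∫ s in a..b, f s ^ 2 ≤ (1 + ε) * (∫ s in a..b, g s ^ 2) + (1 + 1 / ε) * (K * (b - a)) := by
  have hff : IntervalIntegrable (fun s => f s ^ 2) MeasureTheory.volume a b :=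
    (hf.pow 2).intervalIntegrable_of_Icc hab
  have hgg : IntervalIntegrable (fun s => g s ^ 2) MeasureTheory.volume a b :=
    (hg.pow 2).intervalIntegrable_of_Icc hab
  have : ∫ s in a..b, f s ^ 2 ≤ ∫ s in a..b, ((1 + ε) * g s ^ 2 + (1 + 1 / ε) * K) := by
    apply intervalIntegral.integral_mono_on hab hff ((hgg.const_mul _).add (by simp))
    intro s hs
    have h1 := aux_young ε (g s) (f s - g s) hε
    have h2 : (1 + 1 / ε) * (f s - g s) ^ 2 ≤ (1 + 1 / ε) * K :=
      mul_le_mul_of_nonneg_left (h s hs) (by positivity)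
    rw [add_sub_cancel] at h1
    linarith
  rw [intervalIntegral.integral_add (hgg.const_mul _) (by simp),
    intervalIntegral.integral_const_mul, intervalIntegral.integral_const, smul_eq_mul] at this
  linarith

lemma aux_decay (a b γ M c : ℝ) (hab : a < b) (hγ : 0 < γ) (hM0 : 0 < M)
    (φ x : ℝ → E) (hφ : Continuous φ)
    (hM : ∀ s ∈ Set.Icc a b, ‖φ s‖ ≤ M)
    (hx : ∀ t ∈ Set.Icc a b, HasDerivAt x (-(γ * ⟪φ t, x t⟫) • φ t) t)
    (hc : c ≤ ∫ s in a..b, ⟪φ s, x a⟫ ^ 2) :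
    ‖x b‖ ^ 2 ≤ ‖x a‖ ^ 2 - 2 * γ * c / (1 + M ^ 2 * γ * (b - a)) ^ 2 := by
  have hba : 0 < b - a := sub_pos.2 hab
  have hxc : ContinuousOn x (Set.Icc a b) :=
    fun t ht => (hx t ht).continuousAt.continuousWithinAt
  have hu : ContinuousOn (fun s => ⟪φ s, x s⟫) (Set.Icc a b) := hφ.continuousOn.inner hxc
  have hE := aux_energy_s12 a b γ hab.le φ x hφ hx
  have hk := aux_int a b (M ^ 2 * γ * (b - a)) _ hab.le (by positivity) (fun s => ⟪φ s, x a⟫)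
    (fun s => ⟪φ s, x s⟫) (hφ.inner continuous_const).continuousOn hu
    (fun s hs => by
      have := aux_dist a b γ M φ x hφ hM hx a s le_rfl hs.1 hs.2 (φ s) (hM s hs)
      rw [← inner_sub_right, ← neg_sub, inner_neg_right, neg_sq]
      exact this)
  set S := ∫ s in a..b, ⟪φ s, x s⟫ ^ 2
  have h1 : c ≤ (1 + M ^ 2 * γ * (b - a)) ^ 2 * S := by
    refine (hc.trans hk).trans_eq ?_
    field_simp
    ring
  have h2 : c / (1 + M ^ 2 * γ * (b - a)) ^ 2 ≤ S := by
    rw [div_le_iff₀ (by positivity)]; linarith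
  rw [hE, mul_div_assoc]
  have := mul_le_mul_of_nonneg_left h2 (by positivity : 0 ≤ 2 * γ)
  linarith

lemma aux_growth (a b γ M : ℝ) (hab : a < b) (hγ : 0 < γ) (hM0 : 0 < M)
    (hlt : M ^ 2 * γ * (b - a) < 1)
    (φ x : ℝ → E) (hφ : Continuous φ)
    (hM : ∀ s ∈ Set.Icc a b, ‖φ s‖ ≤ M)
    (hx : ∀ t ∈ Set.Icc a b, HasDerivAt x (-(γ * ⟪φ t, x t⟫) • φ t) t) :
    ‖x a‖ ^ 2 ≤ (1 + 2 * γ * M ^ 2 * (b - a) / (1 - M ^ 2 * γ * (b - a)) ^ 2) * ‖x b‖ ^ 2 := by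
  have hba : 0 < b - a := sub_pos.2 hab
  have hxc : ContinuousOn x (Set.Icc a b) :=
    fun t ht => (hx t ht).continuousAt.continuousWithinAt
  have hu : ContinuousOn (fun s => ⟪φ s, x s⟫) (Set.Icc a b) := hφ.continuousOn.inner hxc
  have hE := aux_energy_s12 a b γ hab.le φ x hφ hx
  obtain ⟨α, hα⟩ : ∃ α, α = M ^ 2 * γ * (b - a) := ⟨_, rfl⟩
  have hα0 : 0 < α := by rw [hα]; positivity
  have hα1 : 0 < 1 - α := by rw [hα]; linarith
  have hk := aux_int a b (α / (1 - α)) _ hab.le (by positivity) (fun s => ⟪φ s, x s⟫)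
    (fun s => ⟪φ s, x b⟫) hu (hφ.inner continuous_const).continuousOn
    (fun s hs => by
      have := aux_dist a b γ M φ x hφ hM hx s b hs.1 hs.2 le_rfl (φ s) (hM s hs)
      rw [← inner_sub_right, ← neg_sub, inner_neg_right, neg_sq]
      exact this)
  have hW : ∫ s in a..b, ⟪φ s, x b⟫ ^ 2 ≤ M ^ 2 * (b - a) * ‖x b‖ ^ 2 := by
    have : ∫ s in a..b, ⟪φ s, x b⟫ ^ 2 ≤ ∫ s in a..b, (M * ‖x b‖) ^ 2 := by
      apply intervalIntegral.integral_mono_on hab.le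
        (((hφ.inner continuous_const).pow 2).intervalIntegrable _ _) (by simp)
      intro r hr
      show ⟪φ r, x b⟫ ^ 2 ≤ _
      rw [← sq_abs]
      exact pow_le_pow_left₀ (abs_nonneg _) ((abs_real_inner_le_norm _ _).trans
        (mul_le_mul_of_nonneg_right (hM r hr) (norm_nonneg _))) 2
    rw [intervalIntegral.integral_const, smul_eq_mul] at this
    linarith
  set S := ∫ s in a..b, ⟪φ s, x s⟫ ^ 2
  set W := ∫ s in a..b, ⟪φ s, x b⟫ ^ 2
  have e1 : (γ * M ^ 2) ^ 2 * (b - a) * S * (b - a) = α ^ 2 * S := by rw [hα]; ring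
  rw [e1] at hk
  have e2 : (1 + α / (1 - α)) * W + (1 + 1 / (α / (1 - α))) * (α ^ 2 * S)
      = W / (1 - α) + α * S := by
    field_simp
    ring
  rw [e2] at hk
  have h1 : S * (1 - α) ≤ W / (1 - α) := by linarith
  have h2 : S ≤ W / (1 - α) ^ 2 := by
    rw [le_div_iff₀ hα1] at h1
    rw [le_div_iff₀ (by positivity)]; linarith
  have h3 : S ≤ M ^ 2 * (b - a) * ‖x b‖ ^ 2 / (1 - α) ^ 2 :=
    h2.trans (div_le_div_of_nonneg_right hW (by positivity))
  rw [← hα]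
  have := mul_le_mul_of_nonneg_left h3 (by positivity : 0 ≤ 2 * γ)
  have e3 : (1 + 2 * γ * M ^ 2 * (b - a) / (1 - α) ^ 2) * ‖x b‖ ^ 2
     = ‖x b‖ ^ 2 + 2 * γ * (M ^ 2 * (b - a) * ‖x b‖ ^ 2 / (1 - α) ^ 2) := by ring
  rw [e3]
  linarith

lemma aux_bridge {n : ℕ} (φ : ℝ → EuclideanSpace ℝ (Fin n)) (γ : ℝ)
    (Φ : ℝ → Matrix (Fin n) (Fin n) ℝ) (v : Fin n → ℝ) (t : ℝ)
    (h : ∀ i j, HasDerivAt (fun s => Φ s i j)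
        ((-γ • (Matrix.vecMulVec (φ t) (φ t) * Φ t)) i j) t) :
    HasDerivAt (fun s => WithLp.toLp 2 (Matrix.mulVec (Φ s) v))
      (-(γ * ⟪φ t, WithLp.toLp 2 (Matrix.mulVec (Φ t) v)⟫) • φ t) t := by
  have h1 : HasDerivAt (fun s => Matrix.mulVec (Φ s) v)
      (Matrix.mulVec (-γ • (Matrix.vecMulVec (φ t) (φ t) * Φ t)) v) t := by
    rw [hasDerivAt_pi]
    intro i
    simp only [Matrix.mulVec, dotProduct]
    exact HasDerivAt.fun_sum fun j _ => (h i j).mul_const (v j)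
  have h2 := (PiLp.continuousLinearEquiv 2 ℝ (fun _ : Fin n => ℝ)).symm.hasFDerivAt.comp_hasDerivAt
    t h1
  refine HasDerivAt.congr_deriv (f := fun s => WithLp.toLp 2 (Matrix.mulVec (Φ s) v)) h2 ?_
  ext i
  simp only [EuclideanSpace.inner_eq_star_dotProduct, Matrix.smul_mulVec,
    ← Matrix.mulVec_mulVec, Matrix.vecMulVec_mulVec]
  simp [dotProduct_comm]
  ring

end helpers



/-- Under `μ`-persistent excitation, the matrices
`Φ₁((q+1)δ, qδ) − Φ₂((q+1)δ, qδ)` are invertible at every jump `q`. -/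
theorem stmt12 (n : ℕ) (hn : 1 ≤ n) (δ : ℝ) (hδ : 0 < δ)
    (γ₁ γ₂ : ℝ) (hγ₁ : 0 < γ₁) (hγ₂ : 0 < γ₂) (hγ : γ₁ ≠ γ₂)
    (φM : ℝ) (hφM : 0 ≤ φM)
    (φ : ℝ → EuclideanSpace ℝ (Fin n)) (hφc : Continuous φ)
    (hbound : ∀ s : ℝ, 0 ≤ s → ‖φ s‖ ≤ φM)
    (μ η : ℝ) (hμ : 0 < μ) (hμδ : μ ≤ δ) (hη : 0 < η)
    (hPE : ∀ σ : ℝ, 0 ≤ σ → ∀ v : EuclideanSpace ℝ (Fin n),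
      η * ‖v‖ ^ 2 ≤ ∫ s in σ..(σ + μ), ⟪φ s, v⟫ ^ 2)
    (h7 : 0 < φM ^ 2 * γ₂ * δ) (h7' : φM ^ 2 * γ₂ * δ < 1)
    (h8 : 0 < (1 - 2 * η * γ₁ / (1 + φM ^ 2 * γ₁ * δ) ^ 2) *
      (1 + 2 * γ₂ * φM ^ 2 * δ / (1 - φM ^ 2 * γ₂ * δ) ^ 2))
    (h8' : (1 - 2 * η * γ₁ / (1 + φM ^ 2 * γ₁ * δ) ^ 2) *
      (1 + 2 * γ₂ * φM ^ 2 * δ / (1 - φM ^ 2 * γ₂ * δ) ^ 2) < 1)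
    (Φ₁ Φ₂ : ℕ → ℝ → Matrix (Fin n) (Fin n) ℝ)
    (hΦ₁0 : ∀ q : ℕ, Φ₁ q (q * δ) = 1) (hΦ₂0 : ∀ q : ℕ, Φ₂ q (q * δ) = 1)
    (hΦ₁ : ∀ q : ℕ, ∀ t ∈ Set.Icc ((q : ℝ) * δ) (((q : ℝ) + 1) * δ), ∀ i j,
      HasDerivAt (fun s => Φ₁ q s i j)
        ((-γ₁ • (Matrix.vecMulVec (φ t) (φ t) * Φ₁ q t)) i j) t)
    (hΦ₂ : ∀ q : ℕ, ∀ t ∈ Set.Icc ((q : ℝ) * δ) (((q : ℝ) + 1) * δ), ∀ i j,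
      HasDerivAt (fun s => Φ₂ q s i j)
        ((-γ₂ • (Matrix.vecMulVec (φ t) (φ t) * Φ₂ q t)) i j) t) :
    ∀ q : ℕ, IsUnit (Φ₁ q (((q : ℝ) + 1) * δ) - Φ₂ q (((q : ℝ) + 1) * δ)) := by
  intro q
  rw [← Matrix.mulVec_injective_iff_isUnit]
  rw [← Matrix.coe_mulVecLin, ← LinearMap.ker_eq_bot, LinearMap.ker_eq_bot']
  intro v hv
  rw [Matrix.mulVecLin_apply, Matrix.sub_mulVec, sub_eq_zero] at hv
  have hM0 : 0 < φM := by
    rcases hφM.eq_or_lt with h | h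
    · rw [← h] at h7; simp at h7
    · exact h
  have hq : (0 : ℝ) ≤ q * δ := by positivity
  have hab : (q : ℝ) * δ < (q + 1) * δ := by linarith
  have hba : ((q : ℝ) + 1) * δ - q * δ = δ := by ring
  have hM : ∀ s ∈ Set.Icc ((q : ℝ) * δ) ((q + 1) * δ), ‖φ s‖ ≤ φM :=
    fun s hs => hbound s (hq.trans hs.1)
  have hx1 : ∀ t ∈ Set.Icc ((q : ℝ) * δ) ((q + 1) * δ), _ :=
    fun t ht => aux_bridge φ γ₁ (Φ₁ q) v t (hΦ₁ q t ht)
  have hx2 : ∀ t ∈ Set.Icc ((q : ℝ) * δ) ((q + 1) * δ), _ :=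
    fun t ht => aux_bridge φ γ₂ (Φ₂ q) v t (hΦ₂ q t ht)
  have hc : η * ‖(WithLp.toLp 2 v : EuclideanSpace ℝ (Fin n))‖ ^ 2 ≤
      ∫ s in ((q : ℝ) * δ)..((q + 1) * δ), ⟪φ s, WithLp.toLp 2 v⟫ ^ 2 := by
    refine (hPE _ hq _).trans ?_
    apply intervalIntegral.integral_mono_interval le_rfl (by linarith) (by linarith)
      (Filter.Eventually.of_forall fun r => sq_nonneg _)
    exact ((hφc.inner continuous_const).pow 2).intervalIntegrable _ _
  have d1 := aux_decay _ _ γ₁ φM (η * ‖(WithLp.toLp 2 v : EuclideanSpace ℝ (Fin n))‖ ^ 2)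
    hab hγ₁ hM0 φ _ hφc hM hx1
    (by simpa only [hΦ₁0, Matrix.one_mulVec] using hc)
  have d2 := aux_growth _ _ γ₂ φM hab hγ₂ hM0 (by rw [hba]; exact h7') φ _ hφc hM hx2
  simp only [hΦ₁0, hΦ₂0, Matrix.one_mulVec, hba, hv] at d1 d2
  by_contra hne
  have hne' : (WithLp.toLp 2 v : EuclideanSpace ℝ (Fin n)) ≠ 0 := by
    simpa using hne
  have hpos : 0 < ‖(WithLp.toLp 2 v : EuclideanSpace ℝ (Fin n))‖ ^ 2 := by positivity
  set V := ‖(WithLp.toLp 2 v : EuclideanSpace ℝ (Fin n))‖ ^ 2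
  have hB : 0 ≤ 1 + 2 * γ₂ * φM ^ 2 * δ / (1 - φM ^ 2 * γ₂ * δ) ^ 2 := by positivity
  have d3 := d2.trans (mul_le_mul_of_nonneg_left d1 hB)
  have d4 := mul_lt_mul_of_pos_right h8' hpos
  have e : (1 + 2 * γ₂ * φM ^ 2 * δ / (1 - φM ^ 2 * γ₂ * δ) ^ 2) *
      (V - 2 * γ₁ * (η * V) / (1 + φM ^ 2 * γ₁ * δ) ^ 2) =
      (1 - 2 * η * γ₁ / (1 + φM ^ 2 * γ₁ * δ) ^ 2) *
      (1 + 2 * γ₂ * φM ^ 2 * δ / (1 - φM ^ 2 * γ₂ * δ) ^ 2) * V := by ring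
  linarith
end

section
/- For every η > 0 and every φ_M > 0 there exist δ > 0 and γ₁, γ₂ > 0 with γ₁ ≠ γ₂ such that 0 < φ_M²γ₂δ < 1 and 0 < (1 − 2ηγ₁/(1 + φ_M²γ₁δ)²)(1 + 2γ₂φ_M²δ/(1 − φ_M²γ₂δ)²) < 1. -/
/-- The design conditions (7)–(8) of the hybrid estimator are
always satisfiable. -/
theorem stmt13 (η φM : ℝ) (hη : 0 < η) (hφM : 0 < φM) :
    ∃ δ γ₁ γ₂ : ℝ, 0 < δ ∧ 0 < γ₁ ∧ 0 < γ₂ ∧ γ₁ ≠ γ₂ ∧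
      0 < φM ^ 2 * γ₂ * δ ∧ φM ^ 2 * γ₂ * δ < 1 ∧
      0 < (1 - 2 * η * γ₁ / (1 + φM ^ 2 * γ₁ * δ) ^ 2) *
        (1 + 2 * γ₂ * φM ^ 2 * δ / (1 - φM ^ 2 * γ₂ * δ) ^ 2) ∧
      (1 - 2 * η * γ₁ / (1 + φM ^ 2 * γ₁ * δ) ^ 2) *
        (1 + 2 * γ₂ * φM ^ 2 * δ / (1 - φM ^ 2 * γ₂ * δ) ^ 2) < 1 := by
  have hη0 : η ≠ 0 := ne_of_gt hη
  have hφ0 : φM ≠ 0 := ne_of_gt hφM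
  have e1 : φM ^ 2 * (1 / (4 * η)) * (4 * η / φM ^ 2) = 1 := by field_simp
  have e2 : φM ^ 2 * (1 / (400 * η)) * (4 * η / φM ^ 2) = 1 / 100 := by
    field_simp; norm_num
  have e3 : 2 * η * (1 / (4 * η)) = 1 / 2 := by field_simp; norm_num
  have e4 : 2 * (1 / (400 * η)) * φM ^ 2 * (4 * η / φM ^ 2) = 1 / 50 := by
    linear_combination 2 * e2
  refine ⟨4 * η / φM ^ 2, 1 / (4 * η), 1 / (400 * η), by positivity, by positivity,
    by positivity, ?_, ?_, ?_, ?_, ?_⟩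
  · intro h
    field_simp at h
    norm_num at h
  all_goals simp only [e1, e2, e3, e4]
  all_goals norm_num
end

section
/- Let Φ₁ and Φ₂ be invertible n×n real matrices with operator norms ‖Φ₁‖ ≤ κ₁ and ‖Φ₂⁻¹‖ ≤ κ₂, where κ₁, κ₂ ≥ 0 satisfy κ₁κ₂ < 1. Then Φ₁ − Φ₂ is invertible, and the matrix K₁ = −Φ₂(Φ₁ − Φ₂)⁻¹ satisfies ‖K₁‖ ≤ 1/(1 − κ₁κ₂) and ‖I − K₁‖ ≤ κ₁κ₂/(1 − κ₁κ₂). -/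
/-- The operator norm of a real `n × n` matrix, induced by the Euclidean norm
on `ℝⁿ`. -/
noncomputable def euclideanOpNorm {n : ℕ} (A : Matrix (Fin n) (Fin n) ℝ) : ℝ :=
  ‖(Matrix.toEuclideanCLM (𝕜 := ℝ) A :
      EuclideanSpace ℝ (Fin n) →L[ℝ] EuclideanSpace ℝ (Fin n))‖

/-- Norm bounds on the hybrid gain `K₁ = −Φ₂(Φ₁ − Φ₂)⁻¹`. -/
theorem stmt14 (n : ℕ) (Φ₁ Φ₂ : Matrix (Fin n) (Fin n) ℝ)
    (h₁ : IsUnit Φ₁) (h₂ : IsUnit Φ₂)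
    (κ₁ κ₂ : ℝ) (hκ₁ : 0 ≤ κ₁) (hκ₂ : 0 ≤ κ₂)
    (hn₁ : euclideanOpNorm Φ₁ ≤ κ₁) (hn₂ : euclideanOpNorm Φ₂⁻¹ ≤ κ₂)
    (hκ : κ₁ * κ₂ < 1) :
    IsUnit (Φ₁ - Φ₂) ∧
      euclideanOpNorm (-(Φ₂ * (Φ₁ - Φ₂)⁻¹)) ≤ 1 / (1 - κ₁ * κ₂) ∧
      euclideanOpNorm (1 - -(Φ₂ * (Φ₁ - Φ₂)⁻¹)) ≤ κ₁ * κ₂ / (1 - κ₁ * κ₂) := by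
  set e := Matrix.toEuclideanCLM (n := Fin n) (𝕜 := ℝ) with he
  have hone : ‖e 1‖ ≤ 1 := by
    rw [map_one]; exact ContinuousLinearMap.norm_id_le
  have hX : ‖e (Φ₁ * Φ₂⁻¹)‖ ≤ κ₁ * κ₂ := by
    rw [map_mul]
    exact (norm_mul_le _ _).trans (mul_le_mul hn₁ hn₂ (norm_nonneg _) hκ₁)
  have hu : IsUnit (1 - Φ₁ * Φ₂⁻¹) := by
    have h := isUnit_one_sub_of_norm_lt_one (hX.trans_lt hκ)
    rw [← map_one e, ← map_sub] at h
    have h' := h.map e.symm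
    simpa using h'
  have hd₂ : IsUnit Φ₂.det := (Matrix.isUnit_iff_isUnit_det _).1 h₂
  have hfac : Φ₁ - Φ₂ = -((1 - Φ₁ * Φ₂⁻¹) * Φ₂) := by
    rw [sub_mul, Matrix.nonsing_inv_mul_cancel_right _ _ hd₂, one_mul, neg_sub]
  have hU : IsUnit (Φ₁ - Φ₂) := by
    rw [hfac]; exact (hu.mul h₂).neg
  have hd : IsUnit (Φ₁ - Φ₂).det := (Matrix.isUnit_iff_isUnit_det _).1 hU
  set K := -(Φ₂ * (Φ₁ - Φ₂)⁻¹) with hK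
  have hXK : 1 - K = -(Φ₁ * Φ₂⁻¹ * K) := by
    have h1 : Φ₁ * Φ₂⁻¹ * K = -(Φ₁ * (Φ₁ - Φ₂)⁻¹) := by
      rw [hK, mul_neg, ← mul_assoc, Matrix.nonsing_inv_mul_cancel_right _ _ hd₂]
    have h2 : Φ₁ * (Φ₁ - Φ₂)⁻¹ - Φ₂ * (Φ₁ - Φ₂)⁻¹ = 1 := by
      rw [← sub_mul, Matrix.mul_nonsing_inv _ hd]
    rw [h1, hK, ← h2]; abel
  have hb : ‖e (1 - K)‖ ≤ κ₁ * κ₂ * ‖e K‖ := by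
    rw [hXK, map_neg, norm_neg, map_mul]
    exact (norm_mul_le _ _).trans (mul_le_mul_of_nonneg_right hX (norm_nonneg _))
  have hpos : 0 < 1 - κ₁ * κ₂ := by linarith
  have hK1 : ‖e K‖ ≤ 1 / (1 - κ₁ * κ₂) := by
    have h3 : ‖e K‖ ≤ ‖e 1‖ + ‖e (1 - K)‖ := by
      have h4 : e K = e 1 - e (1 - K) := by rw [← map_sub, sub_sub_cancel]
      rw [h4]; exact norm_sub_le _ _
    rw [le_div_iff₀ hpos]; nlinarith
  refine ⟨hU, hK1, ?_⟩
  refine hb.trans ((mul_le_mul_of_nonneg_left hK1 (mul_nonneg hκ₁ hκ₂)).trans ?_)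
  rw [mul_one_div]
end

section
/- Let n ≥ 1, let δ > 0, let γ₁, γ₂ > 0, let θ* ∈ ℝⁿ, let φ : ℝ → ℝⁿ be continuous with |φ(s)| ≤ φ_M for all s ∈ [0,δ], where φ_M ≥ 0, and let w : ℝ → ℝ be continuous. Define the noisy output y(t) = ⟨φ(t), θ*⟩ + w(t). For i = 1,2, let θᵢ : [0,δ] → ℝⁿ solve θᵢ'(t) = −γᵢ(⟨φ(t), θᵢ(t)⟩ − y(t))φ(t) with θ₁(0) = θ₂(0), and let Φᵢ solve Φᵢ'(t) = −γᵢ φ(t)φ(t)ᵀ Φᵢ(t), Φᵢ(0) = I. Assume Φ₁(δ) − Φ₂(δ) is invertible and set K₁ = −Φ₂(δ)(Φ₁(δ) − Φ₂(δ))⁻¹ and K₂ = I − K₁. Then |K₁θ₁(δ) + K₂θ₂(δ) − θ*| ≤ (‖K₁‖γ₁ + ‖I − K₁‖γ₂) φ_M ∫_{0}^{δ} |w(s)| ds, where ‖·‖ is the operator norm induced by the Euclidean norm. -/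
open scoped RealInnerProductSpace

lemma noise_bound {n : ℕ} (δ γ φM : ℝ) (hδ : 0 < δ) (hγ : 0 < γ)
    (φ z : ℝ → EuclideanSpace ℝ (Fin n))
    (hbound : ∀ s ∈ Set.Icc (0 : ℝ) δ, ‖φ s‖ ≤ φM)
    (w : ℝ → ℝ) (hw : Continuous w) (hz0 : z 0 = 0)
    (hz : ∀ t ∈ Set.Icc (0 : ℝ) δ,
      HasDerivAt z (-(γ * (⟪φ t, z t⟫ - w t)) • φ t) t) :
    ‖z δ‖ ≤ γ * φM * ∫ s in (0:ℝ)..δ, |w s| := by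
  refine le_of_forall_pos_le_add fun ε hε => ?_
  have hpos : ∀ t, 0 < ‖z t‖ ^ 2 + ε ^ 2 := fun t => by positivity
  have hder : ∀ t ∈ Set.Icc (0 : ℝ) δ, HasDerivAt
      (fun t => Real.sqrt (‖z t‖ ^ 2 + ε ^ 2) - γ * φM * ∫ s in (0:ℝ)..t, |w s|)
      ((2 * ⟪z t, -(γ * (⟪φ t, z t⟫ - w t)) • φ t⟫) / (2 * Real.sqrt (‖z t‖ ^ 2 + ε ^ 2))
        - γ * φM * |w t|) t := by
    intro t ht
    have h1 := (((hz t ht).norm_sq).add_const (ε ^ 2)).sqrt (hpos t).ne'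
    have h2 : HasDerivAt (fun t => ∫ s in (0:ℝ)..t, |w s|) (|w t|) t :=
      intervalIntegral.integral_hasDerivAt_right (hw.abs.intervalIntegrable _ _)
        (hw.abs.stronglyMeasurableAtFilter _ _) hw.abs.continuousAt
    exact h1.sub (h2.const_mul (γ * φM))
  have hanti : AntitoneOn
      (fun t => Real.sqrt (‖z t‖ ^ 2 + ε ^ 2) - γ * φM * ∫ s in (0:ℝ)..t, |w s|)
      (Set.Icc 0 δ) := by
    refine antitoneOn_of_hasDerivWithinAt_nonpos (convex_Icc 0 δ)
      (fun t ht => (hder t ht).continuousAt.continuousWithinAt)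
      (fun t ht => (hder t (interior_subset ht)).hasDerivWithinAt) ?_
    intro t ht
    have ht' := interior_subset ht
    have hsq : 0 < Real.sqrt (‖z t‖ ^ 2 + ε ^ 2) := Real.sqrt_pos.2 (hpos t)
    have hle : ‖z t‖ ≤ Real.sqrt (‖z t‖ ^ 2 + ε ^ 2) :=
      Real.le_sqrt_of_sq_le (by nlinarith [sq_nonneg ε])
    have hM : 0 ≤ φM := (norm_nonneg _).trans (hbound t ht')
    rw [sub_nonpos, div_le_iff₀ (by positivity), real_inner_smul_right,
      real_inner_comm (φ t) (z t)]
    set a := ⟪φ t, z t⟫ with ha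
    have h3 : |a| ≤ φM * Real.sqrt (‖z t‖ ^ 2 + ε ^ 2) :=
      (abs_real_inner_le_norm _ _).trans
        (mul_le_mul (hbound t ht') hle (norm_nonneg _) hM)
    have h4 : w t * a ≤ |w t| * (φM * Real.sqrt (‖z t‖ ^ 2 + ε ^ 2)) :=
      (le_abs_self _).trans ((abs_mul _ _).le.trans
        (mul_le_mul_of_nonneg_left h3 (abs_nonneg _)))
    nlinarith [mul_le_mul_of_nonneg_left h4 hγ.le, mul_nonneg hγ.le (sq_nonneg a)]
  have h := hanti (Set.left_mem_Icc.2 hδ.le) (Set.right_mem_Icc.2 hδ.le) hδ.le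
  have hle : ‖z δ‖ ≤ Real.sqrt (‖z δ‖ ^ 2 + ε ^ 2) :=
    Real.le_sqrt_of_sq_le (by nlinarith [sq_nonneg ε])
  simp [hz0, Real.sqrt_sq hε.le] at h
  linarith

lemma flow_bound {n : ℕ} (δ γ φM : ℝ) (hδ : 0 < δ) (hγ : 0 < γ)
    (θs : EuclideanSpace ℝ (Fin n))
    (φ : ℝ → EuclideanSpace ℝ (Fin n))
    (hbound : ∀ s ∈ Set.Icc (0 : ℝ) δ, ‖φ s‖ ≤ φM)
    (w : ℝ → ℝ) (hw : Continuous w)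
    (y : ℝ → ℝ) (hy : ∀ t, y t = ⟪φ t, θs⟫ + w t)
    (θ : ℝ → EuclideanSpace ℝ (Fin n))
    (hθ : ∀ t ∈ Set.Icc (0 : ℝ) δ,
      HasDerivAt θ (-(γ * (⟪φ t, θ t⟫ - y t)) • φ t) t)
    (Φ : ℝ → Matrix (Fin n) (Fin n) ℝ) (hΦ0 : Φ 0 = 1)
    (hΦ : ∀ t ∈ Set.Icc (0 : ℝ) δ, ∀ i j, HasDerivAt (fun s => Φ s i j)
      ((-γ • (Matrix.vecMulVec (φ t) (φ t) * Φ t)) i j) t) :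
    ‖θ δ - θs - Matrix.toEuclideanCLM (𝕜 := ℝ) (Φ δ) (θ 0 - θs)‖
      ≤ γ * φM * ∫ s in (0:ℝ)..δ, |w s| := by
  refine noise_bound δ γ φM hδ hγ φ
    (fun t => θ t - θs - Matrix.toEuclideanCLM (𝕜 := ℝ) (Φ t) (θ 0 - θs)) hbound w hw
    (by simp [hΦ0]) ?_
  intro t ht
  set e := θ 0 - θs
  have hx : HasDerivAt (fun t => Matrix.toEuclideanCLM (𝕜 := ℝ) (Φ t) e)
      (-(γ * ⟪φ t, Matrix.toEuclideanCLM (𝕜 := ℝ) (Φ t) e⟫) • φ t) t := by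
    rw [hasDerivAt_iff_hasFDerivAt, ← hasFDerivWithinAt_univ, hasFDerivWithinAt_euclidean]
    intro i
    rw [hasFDerivWithinAt_univ, hasFDerivAt_iff_hasDerivAt]
    have h := HasDerivAt.fun_sum (u := Finset.univ)
      (fun j _ => (hΦ t ht i j).mul_const (e j))
    refine h.congr_deriv ?_
    have h5 : ⟪φ t, Matrix.toEuclideanCLM (𝕜 := ℝ) (Φ t) e⟫
        = ∑ k, φ t k * ∑ j, Φ t k j * e j := by
      rw [PiLp.inner_apply]
      refine Finset.sum_congr rfl fun k _ => ?_
      simp [Matrix.mulVec, dotProduct, mul_comm]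
    rw [h5]
    simp only [ContinuousLinearMap.comp_apply, ContinuousLinearMap.toSpanSingleton_apply, one_smul, PiLp.proj_apply]
    simp only [Matrix.smul_apply, Matrix.mul_apply, Matrix.vecMulVec_apply, smul_eq_mul,
      PiLp.smul_apply, Finset.mul_sum, Finset.sum_mul, neg_mul, Finset.sum_neg_distrib]
    rw [Finset.sum_comm]
    congr 1
    refine Finset.sum_congr rfl fun k _ => Finset.sum_congr rfl fun j _ => ?_
    ring
  refine (((hθ t ht).sub_const θs).sub hx).congr_deriv ?_
  rw [← sub_smul, hy]
  congr 1
  simp only [inner_sub_right]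
  ring

/-- Error bound for the hybrid reset under measurement noise. -/
theorem stmt15 (n : ℕ) (hn : 1 ≤ n) (δ : ℝ) (hδ : 0 < δ)
    (γ₁ γ₂ : ℝ) (hγ₁ : 0 < γ₁) (hγ₂ : 0 < γ₂)
    (θs : EuclideanSpace ℝ (Fin n))
    (φM : ℝ) (hφM : 0 ≤ φM)
    (φ : ℝ → EuclideanSpace ℝ (Fin n)) (hφc : Continuous φ)
    (hbound : ∀ s ∈ Set.Icc (0 : ℝ) δ, ‖φ s‖ ≤ φM)
    (w : ℝ → ℝ) (hw : Continuous w)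
    (y : ℝ → ℝ) (hy : ∀ t, y t = ⟪φ t, θs⟫ + w t)
    (θ₁ θ₂ : ℝ → EuclideanSpace ℝ (Fin n))
    (hθ₁ : ∀ t ∈ Set.Icc (0 : ℝ) δ,
      HasDerivAt θ₁ (-(γ₁ * (⟪φ t, θ₁ t⟫ - y t)) • φ t) t)
    (hθ₂ : ∀ t ∈ Set.Icc (0 : ℝ) δ,
      HasDerivAt θ₂ (-(γ₂ * (⟪φ t, θ₂ t⟫ - y t)) • φ t) t)
    (hθ0 : θ₁ 0 = θ₂ 0)
    (Φ₁ Φ₂ : ℝ → Matrix (Fin n) (Fin n) ℝ)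
    (hΦ₁0 : Φ₁ 0 = 1) (hΦ₂0 : Φ₂ 0 = 1)
    (hΦ₁ : ∀ t ∈ Set.Icc (0 : ℝ) δ, ∀ i j, HasDerivAt (fun s => Φ₁ s i j)
      ((-γ₁ • (Matrix.vecMulVec (φ t) (φ t) * Φ₁ t)) i j) t)
    (hΦ₂ : ∀ t ∈ Set.Icc (0 : ℝ) δ, ∀ i j, HasDerivAt (fun s => Φ₂ s i j)
      ((-γ₂ • (Matrix.vecMulVec (φ t) (φ t) * Φ₂ t)) i j) t)
    (hinv : IsUnit (Φ₁ δ - Φ₂ δ))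
    (K₁ K₂ : Matrix (Fin n) (Fin n) ℝ)
    (hK₁ : K₁ = -(Φ₂ δ * (Φ₁ δ - Φ₂ δ)⁻¹)) (hK₂ : K₂ = 1 - K₁) :
    ‖Matrix.toEuclideanCLM (𝕜 := ℝ) K₁ (θ₁ δ) +
        Matrix.toEuclideanCLM (𝕜 := ℝ) K₂ (θ₂ δ) - θs‖ ≤
      (euclideanOpNorm K₁ * γ₁ + euclideanOpNorm (1 - K₁) * γ₂) * φM *
        ∫ s in (0:ℝ)..δ, |w s| := by
  have b₁ := flow_bound δ γ₁ φM hδ hγ₁ θs φ hbound w hw y hy θ₁ hθ₁ Φ₁ hΦ₁0 hΦ₁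
  have b₂ := flow_bound δ γ₂ φM hδ hγ₂ θs φ hbound w hw y hy θ₂ hθ₂ Φ₂ hΦ₂0 hΦ₂
  rw [← hθ0] at b₂
  set T := Matrix.toEuclideanCLM (n := Fin n) (𝕜 := ℝ) with hT
  set e := θ₁ 0 - θs with he
  have hdet : IsUnit (Φ₁ δ - Φ₂ δ).det := (Matrix.isUnit_iff_isUnit_det _).1 hinv
  have hz : K₁ * Φ₁ δ + K₂ * Φ₂ δ = 0 := by
    have : K₁ * (Φ₁ δ - Φ₂ δ) = -Φ₂ δ := by
      rw [hK₁, neg_mul, mul_assoc, Matrix.nonsing_inv_mul _ hdet, mul_one]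
    rw [hK₂, sub_mul, one_mul, add_sub_left_comm, ← mul_sub, this, add_neg_cancel]
  have hz' : T K₁ (T (Φ₁ δ) e) + T K₂ (T (Φ₂ δ) e) = 0 := by
    have := congrArg (fun A => T A e) hz
    simpa [map_add, map_mul] using this
  have hs : T K₁ θs + T K₂ θs = θs := by
    rw [hK₂, map_sub, map_one]; simp
  have hkey : T K₁ (θ₁ δ) + T K₂ (θ₂ δ) - θs
      = T K₁ (θ₁ δ - θs - T (Φ₁ δ) e) + T K₂ (θ₂ δ - θs - T (Φ₂ δ) e) := by
    have : T K₁ (θ₁ δ - θs - T (Φ₁ δ) e) + T K₂ (θ₂ δ - θs - T (Φ₂ δ) e)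
        = T K₁ (θ₁ δ) + T K₂ (θ₂ δ) - (T K₁ θs + T K₂ θs)
          - (T K₁ (T (Φ₁ δ) e) + T K₂ (T (Φ₂ δ) e)) := by
      simp only [map_sub]; abel
    rw [this, hz', hs, sub_zero]
  rw [hkey, ← hK₂]
  unfold euclideanOpNorm
  rw [← hT]
  calc _ ≤ _ := norm_add_le _ _
    _ ≤ ‖T K₁‖ * _ + ‖T K₂‖ * _ :=
      add_le_add ((T K₁).le_opNorm_of_le b₁) ((T K₂).le_opNorm_of_le b₂)
    _ = _ := by ring
end

section
/- Let n ≥ 1, let γ > 0, let δ > 0, and let φ : ℝ → ℝⁿ be continuous with |φ(s)| ≤ φ_M for all s ≥ 0, where φ_M ≥ 0. Assume that for every k ∈ ℕ, φ is exciting on [kδ, (k+1)δ] with level η > 0, and set α = 2ηγ/(1 + φ_M²γδ)². Then 0 < α < 1 and every solution x : [0,∞) → ℝⁿ of the gradient-flow error dynamics x'(t) = −γ⟨φ(t), x(t)⟩φ(t) satisfies |x(jδ)| ≤ (1 − α)^{j/2} |x(0)| for every j ∈ ℕ. -/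
open scoped RealInnerProductSpace

lemma cs_aux (f : ℝ → ℝ) (a b : ℝ) (hab : a < b) (hf : ContinuousOn f (Set.uIcc a b)) :
    (∫ t in a..b, |f t|) ^ 2 ≤ (b - a) * ∫ t in a..b, f t ^ 2 := by
  set I := ∫ t in a..b, |f t| with hI
  set F := ∫ t in a..b, f t ^ 2 with hF
  have hd : 0 < b - a := sub_pos.2 hab
  have i1 : IntervalIntegrable (fun t => |f t|) MeasureTheory.volume a b :=
    (hf.abs).intervalIntegrable
  have i2 : IntervalIntegrable (fun t => f t ^ 2) MeasureTheory.volume a b :=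
    (hf.pow 2).intervalIntegrable
  have h0 : 0 ≤ ∫ t in a..b, (((b - a) ^ 2 * f t ^ 2 - (2 * (b - a) * I) * |f t|) + I ^ 2) := by
    apply intervalIntegral.integral_nonneg hab.le
    intro t _
    have : (((b - a) ^ 2 * f t ^ 2 - (2 * (b - a) * I) * |f t|) + I ^ 2)
        = ((b - a) * |f t| - I) ^ 2 := by
      rw [← sq_abs (f t)]; ring
    rw [this]; positivity
  rw [intervalIntegral.integral_add ((i2.const_mul _).sub (i1.const_mul _)) (by simp),
    intervalIntegral.integral_sub (i2.const_mul _) (i1.const_mul _),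
    intervalIntegral.integral_const_mul, intervalIntegral.integral_const_mul,
    intervalIntegral.integral_const, ← hI, ← hF, smul_eq_mul] at h0
  have h1 : 0 ≤ (b - a) * ((b - a) * F - I ^ 2) := by nlinarith
  have := nonneg_of_mul_nonneg_right h1 hd
  linarith

lemma window {n : ℕ} (γ : ℝ) (hγ : 0 < γ) (φM : ℝ) (hφM : 0 ≤ φM) (η : ℝ)
    (φ : ℝ → EuclideanSpace ℝ (Fin n)) (hφc : Continuous φ) (a b : ℝ) (hab : a < b)
    (hbound : ∀ s ∈ Set.Icc a b, ‖φ s‖ ≤ φM)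
    (hu : 0 < φM ^ 2 * γ * (b - a))
    (x : ℝ → EuclideanSpace ℝ (Fin n))
    (hexc : η * ‖x a‖ ^ 2 ≤ ∫ s in a..b, ⟪φ s, x a⟫ ^ 2)
    (hx : ∀ t ∈ Set.Icc a b, HasDerivAt x (-(γ * ⟪φ t, x t⟫) • φ t) t) :
    ‖x b‖ ^ 2 ≤ (1 - 2 * η * γ / (1 + φM ^ 2 * γ * (b - a)) ^ 2) * ‖x a‖ ^ 2 := by
  have hd : 0 < b - a := sub_pos.2 hab
  have hxc : ContinuousOn x (Set.Icc a b) := fun t ht => (hx t ht).continuousAt.continuousWithinAt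
  set f : ℝ → ℝ := fun t => ⟪φ t, x t⟫ with hfdef
  have hfc : ContinuousOn f (Set.Icc a b) := hφc.continuousOn.inner hxc
  have hfcu : ContinuousOn f (Set.uIcc a b) := by rwa [Set.uIcc_of_le hab.le]
  have i1 : IntervalIntegrable (fun t => |f t|) MeasureTheory.volume a b :=
    (hfcu.abs).intervalIntegrable
  have i2 : IntervalIntegrable (fun t => f t ^ 2) MeasureTheory.volume a b :=
    (hfcu.pow 2).intervalIntegrable
  have hcs := cs_aux f a b hab hfcu
  set I := ∫ t in a..b, |f t| with hI
  set F := ∫ t in a..b, f t ^ 2 with hF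
  have hF0 : 0 ≤ F := intervalIntegral.integral_nonneg hab.le (fun t _ => sq_nonneg _)
  -- energy identity
  have hen : ‖x b‖ ^ 2 - ‖x a‖ ^ 2 = -(2 * γ) * F := by
    have hder : ∀ t ∈ Set.uIcc a b,
        HasDerivAt (fun t => ‖x t‖ ^ 2) (-(2 * γ) * f t ^ 2) t := by
      intro t ht
      rw [Set.uIcc_of_le hab.le] at ht
      have h := (hx t ht).norm_sq
      convert h using 1
      rw [inner_smul_right, real_inner_comm (φ t) (x t)]
      simp only [hfdef]; ring
    have h := intervalIntegral.integral_eq_sub_of_hasDerivAt hder (i2.const_mul _)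
    rw [← h, intervalIntegral.integral_const_mul]
  -- displacement
  have hdisp : ∀ s ∈ Set.Icc a b, ‖x s - x a‖ ≤ γ * φM * I := by
    intro s hs
    have hsub : Set.Icc a s ⊆ Set.Icc a b := Set.Icc_subset_Icc_right hs.2
    have hcont : ContinuousOn (fun t => -(γ * f t) • φ t) (Set.uIcc a s) := by
      rw [Set.uIcc_of_le hs.1]
      exact ((continuousOn_const.mul (hfc.mono hsub)).neg).smul hφc.continuousOn
    have h := intervalIntegral.integral_eq_sub_of_hasDerivAt (a := a) (b := s) (f := x)
      (f' := fun t => -(γ * f t) • φ t)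
      (fun t ht => hx t (hsub (by rwa [Set.uIcc_of_le hs.1] at ht))) hcont.intervalIntegrable
    rw [← h]
    have i1s : IntervalIntegrable (fun t => |f t|) MeasureTheory.volume a s := by
      apply ContinuousOn.intervalIntegrable
      rw [Set.uIcc_of_le hs.1]; exact (hfc.mono hsub).abs
    calc _ ≤ ∫ t in a..s, ‖-(γ * f t) • φ t‖ := intervalIntegral.norm_integral_le_integral_norm hs.1
      _ ≤ ∫ t in a..s, γ * φM * |f t| := by
        apply intervalIntegral.integral_mono_on hs.1 hcont.norm.intervalIntegrable
          (i1s.const_mul _)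
        intro t ht
        rw [norm_smul, norm_neg, norm_mul, Real.norm_eq_abs, Real.norm_eq_abs, abs_of_pos hγ]
        have := mul_le_mul_of_nonneg_left (hbound t (hsub ht))
          (mul_nonneg hγ.le (abs_nonneg (f t)))
        linarith
      _ = γ * φM * ∫ t in a..s, |f t| := intervalIntegral.integral_const_mul _ _
      _ ≤ γ * φM * I := by
        apply mul_le_mul_of_nonneg_left _ (by positivity)
        apply intervalIntegral.integral_mono_interval le_rfl hs.1 hs.2 _ i1
        exact Filter.Eventually.of_forall (fun t => abs_nonneg (f t))
  set u := φM ^ 2 * γ * (b - a) with hudef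
  have hpt : ∀ s ∈ Set.Icc a b,
      ⟪φ s, x a⟫ ^ 2 ≤ (1 + u) * f s ^ 2 + (1 + u) * u * F / (b - a) := by
    intro s hs
    set g := ⟪φ s, x s - x a⟫ with hg
    have e : ⟪φ s, x a⟫ = f s - g := by rw [hg, inner_sub_right]; ring
    have hg1 : |g| ≤ φM * (γ * φM * I) :=
      (abs_real_inner_le_norm _ _).trans
        (mul_le_mul (hbound s hs) (hdisp s hs) (norm_nonneg _) hφM)
    have hg2 : g ^ 2 ≤ (φM * (γ * φM * I)) ^ 2 := by
      rw [← sq_abs g]; exact pow_le_pow_left₀ (abs_nonneg _) hg1 2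
    have hg3 : g ^ 2 ≤ u ^ 2 * F / (b - a) := by
      calc g ^ 2 ≤ (φM ^ 2 * γ) ^ 2 * I ^ 2 := by rw [← mul_pow]; convert hg2 using 2; ring
        _ ≤ (φM ^ 2 * γ) ^ 2 * ((b - a) * F) := mul_le_mul_of_nonneg_left hcs (sq_nonneg _)
        _ = u ^ 2 * F / (b - a) := by rw [hudef]; field_simp
    rw [e]
    have k1 : u * (f s - g) ^ 2 ≤ u * (1 + u) * f s ^ 2 + (1 + u) * g ^ 2 := by
      nlinarith [sq_nonneg (u * f s + g)]
    have k2 : (1 + u) * g ^ 2 ≤ (1 + u) * (u ^ 2 * F / (b - a)) :=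
      mul_le_mul_of_nonneg_left hg3 (by linarith)
    refine le_of_mul_le_mul_left ?_ hu
    calc _ ≤ _ := k1.trans (add_le_add_right k2 _)
      _ = _ := by ring
  have hkey : η * ‖x a‖ ^ 2 ≤ (1 + u) ^ 2 * F := by
    refine hexc.trans ?_
    calc _ ≤ ∫ s in a..b, ((1 + u) * f s ^ 2 + (1 + u) * u * F / (b - a)) := by
          apply intervalIntegral.integral_mono_on hab.le _ _ hpt
          · exact Continuous.intervalIntegrable (by fun_prop) _ _
          · exact (i2.const_mul _).add (by simp)
      _ = (1 + u) ^ 2 * F := by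
        rw [intervalIntegral.integral_add (i2.const_mul _) (by simp),
          intervalIntegral.integral_const_mul, intervalIntegral.integral_const, smul_eq_mul, ← hF]
        field_simp
  have hfin : 2 * η * γ / (1 + u) ^ 2 * ‖x a‖ ^ 2 ≤ 2 * γ * F := by
    rw [div_mul_eq_mul_div, div_le_iff₀ (by positivity)]
    nlinarith
  linarith

/-- Geometric decay of the error norm across excitation windows
`[kδ, (k+1)δ]`. -/
theorem stmt17 (n : ℕ) (hn : 1 ≤ n) (γ : ℝ) (hγ : 0 < γ) (δ : ℝ) (hδ : 0 < δ)
    (φM : ℝ) (hφM : 0 ≤ φM) (η : ℝ) (hη : 0 < η)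
    (φ : ℝ → EuclideanSpace ℝ (Fin n)) (hφc : Continuous φ)
    (hbound : ∀ s : ℝ, 0 ≤ s → ‖φ s‖ ≤ φM)
    (hexc : ∀ k : ℕ, ∀ v : EuclideanSpace ℝ (Fin n),
      η * ‖v‖ ^ 2 ≤ ∫ s in ((k : ℝ) * δ)..(((k : ℝ) + 1) * δ), ⟪φ s, v⟫ ^ 2)
    (α : ℝ) (hα : α = 2 * η * γ / (1 + φM ^ 2 * γ * δ) ^ 2) :
    0 < α ∧ α < 1 ∧
      ∀ x : ℝ → EuclideanSpace ℝ (Fin n),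
        (∀ t : ℝ, 0 ≤ t → HasDerivAt x (-(γ * ⟪φ t, x t⟫) • φ t) t) →
        ∀ j : ℕ, ‖x ((j : ℝ) * δ)‖ ≤ (1 - α) ^ ((j : ℝ) / 2) * ‖x 0‖ := by
  have hηle : η ≤ φM ^ 2 * δ := by
    have h := hexc 0 (EuclideanSpace.single (⟨0, hn⟩ : Fin n) (1 : ℝ))
    set v := EuclideanSpace.single (⟨0, hn⟩ : Fin n) (1 : ℝ) with hv
    have hv1 : ‖v‖ = 1 := by simp [hv]
    simp only [Nat.cast_zero, zero_mul, zero_add, one_mul, hv1, one_pow, mul_one] at h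
    refine h.trans ?_
    calc _ ≤ ∫ s in (0:ℝ)..δ, φM ^ 2 := by
          apply intervalIntegral.integral_mono_on hδ.le
            (Continuous.intervalIntegrable (by fun_prop) _ _) (by simp)
          intro s hs
          have := abs_real_inner_le_norm (φ s) v
          rw [hv1, mul_one] at this
          rw [← sq_abs]
          exact pow_le_pow_left₀ (abs_nonneg _) (this.trans (hbound s hs.1)) 2
      _ = φM ^ 2 * δ := by simp [mul_comm]
  have hu : 0 < φM ^ 2 * γ * δ := by nlinarith [mul_pos hη hγ, mul_le_mul_of_nonneg_right hηle hγ.le]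
  have hα0 : 0 < α := by rw [hα]; positivity
  have hα1 : α < 1 := by
    rw [hα, div_lt_one (by positivity)]
    nlinarith [mul_le_mul_of_nonneg_right hηle hγ.le, sq_nonneg (φM ^ 2 * γ * δ)]
  refine ⟨hα0, hα1, fun x hx j => ?_⟩
  have h1 : 0 ≤ 1 - α := by linarith
  have hsq : ∀ j : ℕ, ‖x ((j : ℝ) * δ)‖ ^ 2 ≤ (1 - α) ^ j * ‖x 0‖ ^ 2 := by
    intro j
    induction j with
    | zero => simp
    | succ k ih =>
      have hk : (0:ℝ) ≤ k * δ := by positivity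
      have hlen : ((k : ℝ) + 1) * δ - k * δ = δ := by ring
      have h := window γ hγ φM hφM η φ hφc (k * δ) ((k + 1) * δ) (by linarith)
        (fun s hs => hbound s (hk.trans hs.1)) (by rwa [hlen]) x (hexc k _)
        (fun t ht => hx t (hk.trans ht.1))
      rw [hlen, ← hα] at h
      push_cast
      calc _ ≤ _ := h
        _ ≤ (1 - α) * ((1 - α) ^ k * ‖x 0‖ ^ 2) := mul_le_mul_of_nonneg_left ih h1
        _ = _ := by ring
  refine le_of_sq_le_sq ?_ (by positivity)
  rw [mul_pow, ← Real.rpow_natCast ((1 - α) ^ ((j : ℝ) / 2)) 2, ← Real.rpow_mul h1]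
  have : (j : ℝ) / 2 * ((2 : ℕ) : ℝ) = (j : ℝ) := by push_cast; ring
  rw [this, Real.rpow_natCast]
  exact hsq j
end
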